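/- Assume Conditions (C). There exists a constant A > 0 such that if the quadruple of sequences (m, l, 0, y) verifies Conditions (C3), then P( sup_{l ≤ u ≤ w ≤ m} | L⁰_w − L⁰_u − E[L⁰_w − L⁰_u] | ≥ y ) ≤ A·exp(−y²/(A(y·n^{1/3} + m − l))). -/

import Mathlib

open MeasureTheory Filter Asymptotics
open scoped Classical ENNReal Topology

noncomputable section

/-- `ℓ_n`: the total weight. -/
def ell (w : ∀ n : ℕ, Fin n → ℝ) (n : ℕ) : ℝ := ∑ i, w n i

/-- Conditions (C) on the triangular array of weights, relative to the law `μ` of the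
limiting random variable `W`. -/
structure CondC (w : ∀ n : ℕ, Fin n → ℝ) (μ : Measure ℝ) : Prop where
  isProb : IsProbabilityMeasure μ
  pos : ∀ᵐ x ∂μ, 0 < x
  w_pos : ∀ n, ∀ i : Fin n, 0 < w n i
  w_anti : ∀ n, ∀ i j : Fin n, i ≤ j → w n j ≤ w n i
  int3 : Integrable (fun x => x ^ 3) μ
  moment_eq : ∫ x, x ^ 2 ∂μ = ∫ x, x ∂μ
  weak : ∀ g : BoundedContinuousFunction ℝ ℝ,
    Tendsto (fun n : ℕ => (∑ i : Fin n, g (w n i)) / (n : ℝ)) atTop (𝓝 (∫ x, g x ∂μ))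
  ell_asymp : (fun n : ℕ => ell w n - (∫ x, x ∂μ) * (n : ℝ)) =o[atTop]
      fun n : ℕ => (n : ℝ) ^ ((2 : ℝ) / 3)
  sq_asymp : (fun n : ℕ => (∑ i : Fin n, (w n i) ^ 2) - (∫ x, x ^ 2 ∂μ) * (n : ℝ)) =o[atTop]
      fun n : ℕ => (n : ℝ) ^ ((2 : ℝ) / 3)
  cube_asymp : (fun n : ℕ => (∑ i : Fin n, (w n i) ^ 3) - (∫ x, x ^ 3 ∂μ) * (n : ℝ)) =o[atTop]
      fun _ : ℕ => (1 : ℝ)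
  max_asymp : (fun n : ℕ => ⨆ i : Fin n, w n i) =o[atTop] fun n : ℕ => (n : ℝ) ^ ((1 : ℝ) / 3)

/-- The constant `C = E[W³]/E[W]`. -/
def Cconst (μ : Measure ℝ) : ℝ := (∫ x, x ^ 3 ∂μ) / (∫ x, x ∂μ)

/-- The critical percolation parameter `p_f = (ℓ_n^{1/3} + f_n)/ℓ_n^{4/3}`. -/
def pf (w : ∀ n : ℕ, Fin n → ℝ) (f : ℕ → ℝ) (n : ℕ) : ℝ :=
  (ell w n ^ ((1 : ℝ) / 3) + f n) / ell w n ^ ((4 : ℝ) / 3)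

/-- A Bernoulli-type measure on `Bool` with parameter `p`. -/
def bern (p : ℝ) : Measure Bool :=
  ENNReal.ofReal (1 - p) • Measure.dirac false + ENNReal.ofReal p • Measure.dirac true

/-- The law of the independent edge indicators of the rank-1 inhomogeneous random graph
`G(W,p)`: the indicator attached to the (ordered) pair `(i,j)` is Bernoulli with success
probability `1 - exp (- w i * w j * p)`, all independent. -/
def graphMeasure (n : ℕ) (wn : Fin n → ℝ) (p : ℝ) : Measure (Fin n → Fin n → Bool) :=
  Measure.pi fun i => Measure.pi fun j => bern (1 - Real.exp (-(wn i * wn j * p)))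

/-- The simple graph built from a sample of edge indicators: `i ~ j` iff `i ≠ j` and the
indicator of the pair `(min i j, max i j)` is `true`. -/
def graphOf {n : ℕ} (ω : Fin n → Fin n → Bool) : SimpleGraph (Fin n) :=
  SimpleGraph.fromRel fun i j => ω (min i j) (max i j) = true

/-- The size (number of vertices) of a connected component. -/
def csize {n : ℕ} (G : SimpleGraph (Fin n)) (c : G.ConnectedComponent) : ℕ :=
  Nat.card {v : Fin n // G.connectedComponentMk v = c}

/-- The weight of a connected component: sum of the weights of its vertices. -/
def cweight {n : ℕ} (wn : Fin n → ℝ) (G : SimpleGraph (Fin n)) (c : G.ConnectedComponent) : ℝ :=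
  ∑ v : Fin n, if G.connectedComponentMk v = c then wn v else 0

/-- The number of edges of a connected component. -/
def cedges {n : ℕ} (G : SimpleGraph (Fin n)) (c : G.ConnectedComponent) : ℕ :=
  Nat.card {e : Sym2 (Fin n) // e ∈ G.edgeSet ∧ ∀ v ∈ e, G.connectedComponentMk v = c}

/-- The surplus (excess) of a connected component: edges − vertices + 1. -/
def csurplus {n : ℕ} (G : SimpleGraph (Fin n)) (c : G.ConnectedComponent) : ℤ :=
  (cedges G c : ℤ) - (csize G c : ℤ) + 1

/-- `c` is a largest connected component. -/
def isLargest {n : ℕ} (G : SimpleGraph (Fin n)) (c : G.ConnectedComponent) : Prop :=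
  ∀ c', csize G c' ≤ csize G c

/-- The finset of connected components of a graph on `Fin n`. -/
def comps {n : ℕ} (G : SimpleGraph (Fin n)) : Finset G.ConnectedComponent :=
  Finset.univ.image G.connectedComponentMk

/-- The law of the size-biased random order without replacement `(v(1),…,v(n))`, seen as a
measure on functions `Fin n → Fin n` (supported on permutations `σ`, with
`P(v = σ) = ∏_i w (σ i) / (ℓ_n − ∑_{k<i} w (σ k))`). -/
def sbMeasure (n : ℕ) (wn : Fin n → ℝ) : Measure (Fin n → Fin n) :=
  Measure.sum fun σ : Equiv.Perm (Fin n) =>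
    ENNReal.ofReal (∏ i : Fin n,
        wn (σ i) / ((∑ k, wn k) - ∑ k ∈ Finset.univ.filter fun k => k < i, wn (σ k))) •
      Measure.dirac ⇑σ

/-- The joint law of (edge indicators of `G(W,p)`, size-biased order), the two being
independent. -/
def expMeasure' (n : ℕ) (wn : Fin n → ℝ) (p : ℝ) :
    Measure ((Fin n → Fin n → Bool) × (Fin n → Fin n)) :=
  Measure.sum fun σ : Equiv.Perm (Fin n) =>
    ENNReal.ofReal (∏ i : Fin n,
        wn (σ i) / ((∑ k, wn k) - ∑ k ∈ Finset.univ.filter fun k => k < i, wn (σ k))) •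
      (graphMeasure n wn p).map fun g => (g, ⇑σ)

/-- `sbW wn vord k` is `w_{v(k)}` (1-based), with the conventions `w_{v(0)} = 0` and
`w_{v(k)} = 0` for `k > n`. -/
def sbW {n : ℕ} (wn : Fin n → ℝ) (vord : Fin n → Fin n) (k : ℕ) : ℝ :=
  if h : k - 1 < n then (if k = 0 then 0 else wn (vord ⟨k - 1, h⟩)) else 0

/-- The (0-based) first position, in the order `vord`, of a vertex of the component `c`;
this governs the order in which components are discovered by the breadth-first walk. -/
def firstIdx {n : ℕ} (G : SimpleGraph (Fin n)) (vord : Fin n → Fin n)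
    (c : G.ConnectedComponent) : ℕ :=
  sInf {i : ℕ | ∃ h : i < n, G.connectedComponentMk (vord ⟨i, h⟩) = c}

/-- The number of vertices explored strictly before the exploration of the component `c`
starts: components are explored in the order of their first appearance in `vord`, and the
exploration of `c` occupies the steps `startT c + 1, …, startT c + csize c`. -/
def startT {n : ℕ} (G : SimpleGraph (Fin n)) (vord : Fin n → Fin n)
    (c : G.ConnectedComponent) : ℕ :=
  ∑ v : Fin n, if firstIdx G vord (G.connectedComponentMk v) < firstIdx G vord c then 1 else 0

/-- The state (explored vertices, queue of discovered-but-unexplored vertices) of the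
breadth-first walk after `i` steps; roots are chosen as the first undiscovered vertex in the
order `vord`, and children are queued in the order `vord`. -/
def bfwQueue {n : ℕ} (G : SimpleGraph (Fin n)) (vord : Fin n → Fin n) :
    ℕ → Finset (Fin n) × List (Fin n)
  | 0 => (∅, [])
  | i + 1 =>
    let s := bfwQueue G vord i
    let q : List (Fin n) :=
      if s.2.isEmpty then ((List.ofFn vord).filter fun v => decide (v ∉ s.1)).take 1 else s.2
    match q with
    | [] => (s.1, [])
    | v :: rest =>
      (insert v s.1,
        rest ++ (List.ofFn vord).filter fun u => decide (G.Adj v u ∧ u ∉ s.1 ∧ u ∉ q))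

/-- The reflected exploration process `L` of the breadth-first walk:
`L_0 = 1`, `L_{i+1} = max (L_i + c(i+1) - 1) 1`. -/
def Lproc {n : ℕ} (G : SimpleGraph (Fin n)) (vord : Fin n → Fin n) (i : ℕ) : ℕ :=
  max (bfwQueue G vord i).2.length 1

/-- `discNbrs G vord i` is the number of neighbours of `v(i+1)` (0-based: `vord i`) outside
`{v(1),…,v(i+1)}`, i.e. the increment `X⁰_{i+1} + 1` of the process `L⁰`. -/
def discNbrs {n : ℕ} (G : SimpleGraph (Fin n)) (vord : Fin n → Fin n) (i : ℕ) : ℕ :=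
  Nat.card {j : Fin n // (∃ h : i < n, G.Adj (vord ⟨i, h⟩) j) ∧
    ∀ k : ℕ, ∀ hk : k < n, k ≤ i → vord ⟨k, hk⟩ ≠ j}

/-- The process `L⁰`: `L⁰_0 = 1`, `L⁰_{i+1} = L⁰_i + X⁰_{i+1}` where
`X⁰_{i+1} = ∑_{j ∉ {v(1),…,v(i+1)}} Y(v(i+1), j) − 1`. -/
def L0 {n : ℕ} (G : SimpleGraph (Fin n)) (vord : Fin n → Fin n) (m : ℕ) : ℤ :=
  1 - (m : ℤ) + ∑ i ∈ Finset.range m, (discNbrs G vord i : ℤ)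

/-- The deterministic-drift process `L̃^h`, defined by
`L̃^h_m + m − 1 = ∑_{i=1}^m ∑_{k > i+h} (1 − exp (−w_{v(i)} w_{v(k)} p))`,
the inner sum being over positions `k ≤ n` in the size-biased order. -/
def Ltilde {n : ℕ} (wn : Fin n → ℝ) (p : ℝ) (vord : Fin n → Fin n) (h m : ℕ) : ℝ :=
  1 - (m : ℝ) + ∑ i ∈ Finset.range m,
    if hi : i < n then
      ∑ k : Fin n, if i + h < (k : ℕ) then
        1 - Real.exp (-(wn (vord ⟨i, hi⟩) * wn (vord k) * p)) else 0
    else 0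

/-- The law of the independent exponential clocks `(T_k)_{k ≤ n}`, `T_k` of rate `w_k / ℓ_n`. -/
def clocksMeasure (n : ℕ) (wn : Fin n → ℝ) : Measure (Fin n → ℝ) :=
  Measure.pi fun k => ProbabilityTheory.expMeasure (wn k / ∑ i, wn i)

/-- `N(x)`: the number of clocks that have rung by time `x`. -/
def Nclock {n : ℕ} (x : ℝ) (ω : Fin n → ℝ) : ℕ :=
  ∑ k : Fin n, if ω k ≤ x then 1 else 0

/-- `X(x)`: the total weight of the clocks that have rung by time `x`. -/
def Xclock {n : ℕ} (wn : Fin n → ℝ) (x : ℝ) (ω : Fin n → ℝ) : ℝ :=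
  ∑ k : Fin n, if ω k ≤ x then wn k else 0

/-- Conditions (C2) on a pair of sequences `(a, b)`, relative to the constant `Ā`. -/
structure Cond2 (w : ∀ n : ℕ, Fin n → ℝ) (Abar : ℝ) (a b : ℕ → ℝ) : Prop where
  exp_lt : ∀ᶠ n : ℕ in atTop,
    Real.exp (-(b n) ^ 2 / (Abar * (b n * (n : ℝ) ^ ((1 : ℝ) / 3) + a n))) < 1 / 4
  a_top : Tendsto a atTop atTop
  b_top : Tendsto b atTop atTop
  a_lito : a =o[atTop] fun n : ℕ => (n : ℝ)
  b_bigO : b =O[atTop] a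
  a_bigO : a =O[atTop] fun n => b n * ell w n ^ ((1 : ℝ) / 3)
  a_sq_bigO : (fun n => a n ^ 2) =O[atTop] fun n => b n * ell w n

/-- Conditions (C3) on a quadruple of sequences `(a, b, c, d)`. -/
structure Cond3 (w : ∀ n : ℕ, Fin n → ℝ) (Abar : ℝ) (a b c d : ℕ → ℝ) : Prop where
  sum_lito : (fun n => a n + c n) =o[atTop] fun n : ℕ => (n : ℝ)
  diff_top : Tendsto (fun n => a n - b n) atTop atTop
  d_bigO : d =O[atTop] fun n => a n - b n
  c2 : Cond2 w Abar (fun n => Real.sqrt ((a n - b n) * (a n + c n))) d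

/-- The list of component sizes, sorted in decreasing order. -/
def sizesList {n : ℕ} (G : SimpleGraph (Fin n)) : List ℕ :=
  (((comps G).val.map fun c => csize G c).sort (· ≤ ·)).reverse

/-- `kthSize G k` is the size of the `(k+1)`-st largest connected component of `G`
(`0` if there is no such component). -/
def kthSize {n : ℕ} (G : SimpleGraph (Fin n)) (k : ℕ) : ℕ := (sizesList G).getD k 0

end

/-! ### Size-biased orders -/

/-- the weight of a permutation under the size-biased law -/
noncomputable def sbP {n : ℕ} (wn : Fin n → ℝ) (σ : Equiv.Perm (Fin n)) : ℝ :=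
  ∏ i : Fin n, wn (σ i) / ((∑ k, wn k) - ∑ k ∈ Finset.univ.filter fun k => k < i, wn (σ k))

/-- total weight of the first `k` vertices -/
noncomputable def Wpre {n : ℕ} (wn : Fin n → ℝ) (σ : Equiv.Perm (Fin n)) (k : ℕ) : ℝ :=
  ∑ i ∈ Finset.univ.filter (fun i : Fin n => (i : ℕ) < k), wn (σ i)

/-- the set of the first `k` vertices -/
noncomputable def pre {n : ℕ} (σ : Equiv.Perm (Fin n)) (k : ℕ) : Finset (Fin n) :=
  (Finset.univ.filter (fun i : Fin n => (i : ℕ) < k)).image σ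

/-- partial product of the first `k` factors -/
noncomputable def sbPk {n : ℕ} (wn : Fin n → ℝ) (k : ℕ) (σ : Equiv.Perm (Fin n)) : ℝ :=
  ∏ i ∈ Finset.univ.filter (fun i : Fin n => (i : ℕ) < k),
    wn (σ i) / ((∑ k, wn k) - Wpre wn σ i)

/-- two orders with the same first `k` entries -/
def SamePre {n : ℕ} (k : ℕ) (σ σ' : Equiv.Perm (Fin n)) : Prop :=
  ∀ i : Fin n, (i : ℕ) < k → σ i = σ' i

lemma mem_pre {n : ℕ} (σ : Equiv.Perm (Fin n)) (k : ℕ) (j : Fin n) :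
    j ∈ pre σ k ↔ ∃ i : Fin n, (i : ℕ) < k ∧ σ i = j := by
  simp [pre]

lemma pre_congr {n : ℕ} {k : ℕ} {σ σ' : Equiv.Perm (Fin n)} (h : SamePre k σ σ') :
    pre σ k = pre σ' k := by
  ext j
  simp only [mem_pre]
  constructor
  · rintro ⟨i, hi, rfl⟩
    exact ⟨i, hi, (h i hi).symm⟩
  · rintro ⟨i, hi, rfl⟩
    exact ⟨i, hi, h i hi⟩

lemma SamePre.mono {n : ℕ} {k k' : ℕ} {σ σ' : Equiv.Perm (Fin n)} (h : SamePre k σ σ')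
    (hk : k' ≤ k) : SamePre k' σ σ' := fun i hi => h i (lt_of_lt_of_le hi hk)

lemma Wpre_congr {n : ℕ} (wn : Fin n → ℝ) {k : ℕ} {σ σ' : Equiv.Perm (Fin n)}
    (h : SamePre k σ σ') : Wpre wn σ k = Wpre wn σ' k := by
  unfold Wpre
  apply Finset.sum_congr rfl
  intro i hi
  rw [h i (by simpa using hi)]

lemma Wpre_eq_sum_pre {n : ℕ} (wn : Fin n → ℝ) (σ : Equiv.Perm (Fin n)) (k : ℕ) :
    Wpre wn σ k = ∑ j ∈ pre σ k, wn j := by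
  unfold Wpre pre
  rw [Finset.sum_image (fun a _ b _ h => σ.injective h)]

lemma card_pre_le {n : ℕ} (σ : Equiv.Perm (Fin n)) (k : ℕ) : (pre σ k).card ≤ k := by
  unfold pre
  refine Finset.card_image_le.trans ?_
  calc (Finset.univ.filter (fun i : Fin n => (i : ℕ) < k)).card
      = ((Finset.univ.filter (fun i : Fin n => (i : ℕ) < k)).image (fun i : Fin n => (i : ℕ))).card := by
        rw [Finset.card_image_of_injective _ Fin.val_injective]
    _ ≤ (Finset.range k).card := by
        apply Finset.card_le_card
        intro x hx
        simp only [Finset.mem_image, Finset.mem_filter] at hx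
        obtain ⟨i, ⟨_, hi⟩, rfl⟩ := hx
        simpa using hi
    _ = k := by simp

lemma pre_succ {n : ℕ} (σ : Equiv.Perm (Fin n)) (k : ℕ) (hk : k < n) :
    pre σ (k + 1) = insert (σ ⟨k, hk⟩) (pre σ k) := by
  ext j
  simp only [mem_pre, Finset.mem_insert]
  constructor
  · rintro ⟨i, hi, rfl⟩
    rcases Nat.lt_succ_iff_lt_or_eq.mp hi with h | h
    · exact Or.inr ⟨i, h, rfl⟩
    · left; congr 1; exact Fin.ext h
  · rintro (rfl | ⟨i, hi, rfl⟩)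
    · exact ⟨⟨k, hk⟩, by simp, rfl⟩
    · exact ⟨i, by omega, rfl⟩

lemma not_mem_pre {n : ℕ} (σ : Equiv.Perm (Fin n)) (k : ℕ) (i : Fin n) :
    σ i ∉ pre σ k ↔ k ≤ (i : ℕ) := by
  rw [mem_pre]
  constructor
  · intro h
    by_contra hlt
    exact h ⟨i, by omega, rfl⟩
  · rintro h ⟨i', hi', he⟩
    rw [σ.injective he] at hi'
    omega

lemma sum_compl_pre {n : ℕ} (σ : Equiv.Perm (Fin n)) (k : ℕ) (f : Fin n → ℝ) :
    ∑ j ∈ (pre σ k)ᶜ, f j = ∑ i ∈ Finset.univ.filter (fun i : Fin n => k ≤ (i : ℕ)), f (σ i) := by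
  have : (pre σ k)ᶜ = (Finset.univ.filter (fun i : Fin n => k ≤ (i : ℕ))).image σ := by
    ext j
    obtain ⟨i, rfl⟩ := σ.surjective j
    rw [Finset.mem_compl, not_mem_pre]
    simp
  rw [this, Finset.sum_image (fun a _ b _ h => σ.injective h)]

lemma sub_Wpre {n : ℕ} (wn : Fin n → ℝ) (σ : Equiv.Perm (Fin n)) (k : ℕ) :
    (∑ j, wn j) - Wpre wn σ k = ∑ j ∈ (pre σ k)ᶜ, wn j := by
  rw [Wpre_eq_sum_pre, ← Finset.sum_add_sum_compl (pre σ k)]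
  ring

lemma sub_Wpre_pos {n : ℕ} (wn : Fin n → ℝ) (hw : ∀ i, 0 < wn i) (σ : Equiv.Perm (Fin n)) (k : ℕ)
    (hk : k < n) : 0 < (∑ j, wn j) - Wpre wn σ k := by
  rw [sub_Wpre]
  apply Finset.sum_pos (fun i _ => hw i)
  refine ⟨σ ⟨k, hk⟩, ?_⟩
  rw [Finset.mem_compl, not_mem_pre]

lemma card_ge {n k : ℕ} (hk : k ≤ n) :
    (Finset.univ.filter (fun i : Fin n => k ≤ (i : ℕ))).card = n - k := by
  have h1 : (Finset.univ.filter (fun i : Fin n => k ≤ (i : ℕ))).card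
      = ((Finset.univ.filter (fun i : Fin n => k ≤ (i : ℕ))).image (fun i : Fin n => (i : ℕ))).card := by
    rw [Finset.card_image_of_injective _ Fin.val_injective]
  rw [h1]
  have : (Finset.univ.filter (fun i : Fin n => k ≤ (i : ℕ))).image (fun i : Fin n => (i : ℕ))
      = Finset.Ico k n := by
    ext x
    simp only [Finset.mem_image, Finset.mem_filter, Finset.mem_univ, true_and, Finset.mem_Ico]
    constructor
    · rintro ⟨i, hi, rfl⟩; exact ⟨hi, i.2⟩
    · rintro ⟨h1, h2⟩; exact ⟨⟨x, h2⟩, h1, rfl⟩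
  rw [this]; simp

/-- symmetrization by swaps -/
lemma sum_swap {n k : ℕ} (hk : k < n) (h : Equiv.Perm (Fin n) → Fin n → ℝ)
    (hh : ∀ σ σ', SamePre k σ σ' → h σ = h σ') :
    ((n - k : ℕ) : ℝ) * ∑ σ, h σ (σ ⟨k, hk⟩) = ∑ σ, ∑ j ∈ (pre σ k)ᶜ, h σ j := by
  simp_rw [sum_compl_pre]
  rw [Finset.sum_comm]
  have : ∀ i ∈ Finset.univ.filter (fun i : Fin n => k ≤ (i : ℕ)),
      ∑ σ : Equiv.Perm (Fin n), h σ (σ i) = ∑ σ : Equiv.Perm (Fin n), h σ (σ ⟨k, hk⟩) := by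
    intro i hi
    have hi : k ≤ (i : ℕ) := by simpa using hi
    apply Fintype.sum_equiv (Equiv.mulRight (Equiv.swap i ⟨k, hk⟩))
    intro σ
    have e : h (σ * Equiv.swap i ⟨k, hk⟩) = h σ := by
      apply hh
      intro a ha
      rw [Equiv.Perm.mul_apply, Equiv.swap_apply_of_ne_of_ne]
      · intro e; rw [e] at ha; omega
      · intro e; rw [e] at ha; simp at ha
    simp [e]
  rw [Finset.sum_congr rfl this, Finset.sum_const, card_ge hk.le, nsmul_eq_mul]

lemma sbPk_congr {n : ℕ} (wn : Fin n → ℝ) {k : ℕ} {σ σ' : Equiv.Perm (Fin n)}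
    (h : SamePre k σ σ') : sbPk wn k σ = sbPk wn k σ' := by
  unfold sbPk
  apply Finset.prod_congr rfl
  intro i hi
  have hi : (i : ℕ) < k := by simpa using hi
  rw [h i hi, Wpre_congr wn (h.mono hi.le)]

lemma sbPk_succ {n : ℕ} (wn : Fin n → ℝ) {k : ℕ} (hk : k < n) (σ : Equiv.Perm (Fin n)) :
    sbPk wn (k + 1) σ = sbPk wn k σ * (wn (σ ⟨k, hk⟩) / ((∑ k, wn k) - Wpre wn σ k)) := by
  unfold sbPk
  have : Finset.univ.filter (fun i : Fin n => (i : ℕ) < k + 1)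
      = insert ⟨k, hk⟩ (Finset.univ.filter (fun i : Fin n => (i : ℕ) < k)) := by
    ext i
    simp only [Finset.mem_filter, Finset.mem_univ, true_and, Finset.mem_insert, Fin.ext_iff]
    omega
  rw [this, Finset.prod_insert (by simp), mul_comm]

lemma sbPk_n {n : ℕ} (wn : Fin n → ℝ) (σ : Equiv.Perm (Fin n)) : sbPk wn n σ = sbP wn σ := by
  unfold sbPk sbP
  rw [Finset.filter_true_of_mem (fun i _ => i.2)]
  rfl

lemma sum_sbPk_succ {n : ℕ} (wn : Fin n → ℝ) {k : ℕ} (hk : k < n)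
    (h : Equiv.Perm (Fin n) → Fin n → ℝ) (hh : ∀ σ σ', SamePre k σ σ' → h σ = h σ') :
    ((n - k : ℕ) : ℝ) * ∑ σ, sbPk wn (k + 1) σ * h σ (σ ⟨k, hk⟩)
      = ∑ σ, sbPk wn k σ * ∑ j ∈ (pre σ k)ᶜ, wn j / ((∑ k, wn k) - Wpre wn σ k) * h σ j := by
  have := sum_swap hk (fun σ j => sbPk wn k σ * (wn j / ((∑ k, wn k) - Wpre wn σ k) * h σ j)) (by
    intro σ σ' hs
    ext j
    rw [sbPk_congr wn hs, Wpre_congr wn hs, hh σ σ' hs])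
  simp_rw [Finset.mul_sum] at this ⊢
  rw [← this]
  apply Finset.sum_congr rfl
  intro σ _
  rw [sbPk_succ wn hk]
  ring

lemma sum_sbP_marg {n : ℕ} (wn : Fin n → ℝ) (hw : ∀ i, 0 < wn i) (d : ℕ) :
    ∀ k : ℕ, k + d = n → ∀ F : Equiv.Perm (Fin n) → ℝ, (∀ σ σ', SamePre k σ σ' → F σ = F σ') →
    (d.factorial : ℝ) * ∑ σ, sbP wn σ * F σ = ∑ σ, sbPk wn k σ * F σ := by
  induction d with
  | zero =>
    intro k hk F _
    have : k = n := by omega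
    subst this
    simp [sbPk_n]
  | succ d ih =>
    intro k hk F hF
    have hkn : k < n := by omega
    have h1 := ih (k + 1) (by omega) F (fun σ σ' hs => hF σ σ' (hs.mono (by omega)))
    have h2 := sum_sbPk_succ wn hkn (fun σ _ => F σ)
      (fun σ σ' hs => by ext; exact hF σ σ' hs)
    have e : n - k = d + 1 := by omega
    rw [Nat.factorial_succ, Nat.cast_mul, mul_assoc, h1, ← e, h2]
    apply Finset.sum_congr rfl
    intro σ _
    rw [← Finset.sum_mul, ← Finset.sum_div, ← sub_Wpre,
      div_self (sub_Wpre_pos wn hw σ k hkn).ne', one_mul]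

/-- one step of the size-biased order -/
lemma sb_step {n : ℕ} (wn : Fin n → ℝ) (hw : ∀ i, 0 < wn i) {k : ℕ} (hk : k < n)
    (h : Equiv.Perm (Fin n) → Fin n → ℝ) (hh : ∀ σ σ', SamePre k σ σ' → h σ = h σ') :
    ∑ σ, sbP wn σ * h σ (σ ⟨k, hk⟩)
      = ∑ σ, sbP wn σ * ∑ j ∈ (pre σ k)ᶜ, wn j / ((∑ k, wn k) - Wpre wn σ k) * h σ j := by
  have h1 := sum_sbP_marg wn hw (n - (k + 1)) (k + 1) (by omega) (fun σ => h σ (σ ⟨k, hk⟩))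
    (fun σ σ' hs => by rw [hh σ σ' (hs.mono (by omega)), hs ⟨k, hk⟩ (by simp)])
  have h2 := sum_sbP_marg wn hw (n - k) k (by omega)
    (fun σ => ∑ j ∈ (pre σ k)ᶜ, wn j / ((∑ k, wn k) - Wpre wn σ k) * h σ j)
    (fun σ σ' hs => by rw [hh σ σ' hs, pre_congr hs, Wpre_congr wn hs])
  have h3 := sum_sbPk_succ wn hk h hh
  rw [← h1, ← h2, ← mul_assoc] at h3
  have e : n - k = (n - (k + 1)) + 1 := by omega
  have e2 : ((n - k : ℕ) : ℝ) * ((n - (k + 1)).factorial : ℝ) = ((n - k).factorial : ℝ) := by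
    rw [e, Nat.factorial_succ]; push_cast; ring
  rw [e2] at h3
  exact mul_left_cancel₀ (by positivity) h3

lemma sbP_nonneg {n : ℕ} (wn : Fin n → ℝ) (hw : ∀ i, 0 < wn i) (σ : Equiv.Perm (Fin n)) :
    0 ≤ sbP wn σ := by
  unfold sbP
  apply Finset.prod_nonneg
  intro i _
  exact div_nonneg (hw _).le (sub_Wpre_pos wn hw σ i i.2).le

lemma sum_sbP {n : ℕ} (wn : Fin n → ℝ) (hw : ∀ i, 0 < wn i) : ∑ σ, sbP wn σ = 1 := by
  have := sum_sbP_marg wn hw n 0 (by omega) (fun _ => 1) (fun _ _ _ => rfl)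
  simp only [mul_one] at this
  have h2 : ∑ σ : Equiv.Perm (Fin n), sbPk wn 0 σ = (n.factorial : ℝ) := by
    simp [sbPk, Fintype.card_perm]
  rw [h2] at this
  have h3 : (n.factorial : ℝ) ≠ 0 := by positivity
  exact mul_left_cancel₀ h3 (by rw [this, mul_one])

/-! ### Edge indicators -/

/-- Bernoulli weights -/
noncomputable def bq (q : ℝ) (x : Bool) : ℝ := if x = true then q else 1 - q

/-- edge probability -/
noncomputable def eq' {n : ℕ} (wn : Fin n → ℝ) (p : ℝ) (i j : Fin n) : ℝ :=
  1 - Real.exp (-(wn i * wn j * p))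

/-- weight of a configuration -/
noncomputable def wt {n : ℕ} (wn : Fin n → ℝ) (p : ℝ) (g : Fin n → Fin n → Bool) : ℝ :=
  ∏ i, ∏ j, bq (eq' wn p i j) (g i j)

/-- flipping a coordinate -/
noncomputable def flipc {n : ℕ} (a b : Fin n) (g : Fin n → Fin n → Bool) : Fin n → Fin n → Bool :=
  fun i j => if i = a ∧ j = b then !(g i j) else g i j

lemma flipc_flipc {n : ℕ} (a b : Fin n) (g : Fin n → Fin n → Bool) :
    flipc a b (flipc a b g) = g := by
  funext i j
  unfold flipc
  split_ifs <;> simp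

lemma sum_flip {n : ℕ} (a b : Fin n) (X : (Fin n → Fin n → Bool) → ℝ)
    (hX : ∀ g, X (flipc a b g) = X g) (u : Bool → ℝ) :
    2 * ∑ g, X g * u (g a b) = (u true + u false) * ∑ g, X g := by
  have h1 : ∑ g, X g * u (g a b) = ∑ g, X g * u (!(g a b)) := by
    apply Fintype.sum_equiv ⟨flipc a b, flipc a b, flipc_flipc a b, flipc_flipc a b⟩
    intro g
    simp [hX, flipc]
  rw [two_mul]
  nth_rewrite 2 [h1]
  rw [← Finset.sum_add_distrib, Finset.mul_sum]
  apply Finset.sum_congr rfl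
  intro g _
  cases g a b <;> simp <;> ring

lemma wt_split {n : ℕ} (wn : Fin n → ℝ) (p : ℝ) (a b : Fin n) (g : Fin n → Fin n → Bool) :
    wt wn p g = (∏ x ∈ Finset.univ.erase (a, b), bq (eq' wn p x.1 x.2) (g x.1 x.2))
      * bq (eq' wn p a b) (g a b) := by
  have : wt wn p g = ∏ x : Fin n × Fin n, bq (eq' wn p x.1 x.2) (g x.1 x.2) := by
    unfold wt
    rw [Fintype.prod_prod_type]
  rw [this, ← Finset.prod_erase_mul _ _ (Finset.mem_univ (a, b))]

/-- integrating out one edge -/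
lemma sum_edge {n : ℕ} (wn : Fin n → ℝ) (p : ℝ) (a b : Fin n)
    (F : (Fin n → Fin n → Bool) → ℝ) (hF : ∀ g, F (flipc a b g) = F g) (u : Bool → ℝ) :
    ∑ g, wt wn p g * (F g * u (g a b))
      = (eq' wn p a b * u true + (1 - eq' wn p a b) * u false) * ∑ g, wt wn p g * F g := by
  set R : (Fin n → Fin n → Bool) → ℝ := fun g =>
    ∏ x ∈ Finset.univ.erase (a, b), bq (eq' wn p x.1 x.2) (g x.1 x.2) with hR
  have hRf : ∀ g, R (flipc a b g) * F (flipc a b g) = R g * F g := by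
    intro g
    rw [hF]
    congr 1
    apply Finset.prod_congr rfl
    rintro ⟨x, y⟩ hx
    have hx : ¬ (x = a ∧ y = b) := by simpa [Prod.ext_iff] using hx
    simp [flipc, hx]
  have h1 := sum_flip a b (fun g => R g * F g) hRf (fun x => bq (eq' wn p a b) x * u x)
  have h2 := sum_flip a b (fun g => R g * F g) hRf (fun x => bq (eq' wn p a b) x)
  have e1 : ∑ g, wt wn p g * (F g * u (g a b))
      = ∑ g, R g * F g * (bq (eq' wn p a b) (g a b) * u (g a b)) := by
    apply Finset.sum_congr rfl; intro g _; rw [wt_split wn p a b]; ring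
  have e2 : ∑ g, wt wn p g * F g = ∑ g, R g * F g * bq (eq' wn p a b) (g a b) := by
    apply Finset.sum_congr rfl; intro g _; rw [wt_split wn p a b]; ring
  rw [e1, e2]
  simp only [bq] at h1 h2 ⊢
  simp at h1 h2 ⊢
  linear_combination (1/2) * h1 - (1/2) * (eq' wn p a b * u true + (1 - eq' wn p a b) * u false) * h2

/-- the edge indicator -/
noncomputable def ed {n : ℕ} (g : Fin n → Fin n → Bool) (a b : Fin n) : ℝ :=
  if g (min a b) (max a b) = true then 1 else 0

lemma eq'_symm {n : ℕ} (wn : Fin n → ℝ) (p : ℝ) (a b : Fin n) :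
    eq' wn p (min a b) (max a b) = eq' wn p a b := by
  rcases le_total a b with h | h
  · simp [h]
  · simp only [min_eq_right h, max_eq_left h, eq']
    rw [mul_comm (wn b)]

lemma ed_flip_ne {n : ℕ} (g : Fin n → Fin n → Bool) (a b c : Fin n) (hbc : b ≠ c) :
    ed (flipc (min a b) (max a b) g) a c = ed g a c := by
  unfold ed flipc
  have : ¬ (min a c = min a b ∧ max a c = max a b) := by
    rintro ⟨h1, h2⟩
    apply hbc
    rcases le_total a b with h | h <;> rcases le_total a c with h' | h' <;>
      simp only [h, h', min_eq_left, max_eq_right, min_eq_right, max_eq_left] at h1 h2 <;> order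
  rw [if_neg this]

/-- integrating out the edges from `a` to `T` in exponential form -/
lemma sum_exp_edges {n : ℕ} (wn : Fin n → ℝ) (p : ℝ) (a : Fin n) (lam : ℝ)
    (T : Finset (Fin n)) (F : (Fin n → Fin n → Bool) → ℝ)
    (hF : ∀ b ∈ T, ∀ g, F (flipc (min a b) (max a b) g) = F g) :
    ∑ g, wt wn p g * (F g * Real.exp (lam * ∑ b ∈ T, ed g a b))
      = (∏ b ∈ T, (1 + eq' wn p a b * (Real.exp lam - 1))) * ∑ g, wt wn p g * F g := by
  induction T using Finset.induction_on with
  | empty => simp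
  | insert b T hb ih =>
    have h := sum_edge wn p (min a b) (max a b)
      (fun g => F g * Real.exp (lam * ∑ b ∈ T, ed g a b)) (by
        intro g
        rw [hF b (Finset.mem_insert_self _ _)]
        congr 3
        apply Finset.sum_congr rfl
        intro c hc
        apply ed_flip_ne
        rintro rfl; exact hb hc)
      (fun x => if x = true then Real.exp lam else 1)
    rw [ih (fun c hc => hF c (Finset.mem_insert_of_mem hc)), eq'_symm] at h
    rw [Finset.prod_insert hb, mul_assoc]
    simp only [if_true, Bool.false_eq_true, if_false] at h
    have e : ∀ g : Fin n → Fin n → Bool, Real.exp (lam * ∑ c ∈ insert b T, ed g a c)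
        = Real.exp (lam * ∑ c ∈ T, ed g a c) *
          (if g (min a b) (max a b) = true then Real.exp lam else 1) := by
      intro g
      rw [Finset.sum_insert hb, mul_add, Real.exp_add, mul_comm]
      congr 1
      unfold ed
      split_ifs <;> simp
    simp_rw [e, ← mul_assoc] at h ⊢
    rw [h]
    ring

lemma sum_lin_edge {n : ℕ} (wn : Fin n → ℝ) (p : ℝ) (a b : Fin n) :
    ∑ g, wt wn p g * ed g a b = eq' wn p a b * ∑ g, wt wn p g := by
  have h := sum_edge wn p (min a b) (max a b) (fun _ => 1) (fun _ => rfl)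
      (fun x => if x = true then 1 else 0)
  rw [eq'_symm] at h
  simpa [ed] using h

lemma sum_wt {n : ℕ} (wn : Fin n → ℝ) (p : ℝ) :
    ∑ g, wt wn p g = 1 := by
  unfold wt
  rw [← Fintype.prod_sum (fun i (r : Fin n → Bool) => ∏ j, bq (eq' wn p i j) (r j))]
  apply Finset.prod_eq_one
  intro i _
  rw [← Fintype.prod_sum (fun j x => bq (eq' wn p i j) x)]
  apply Finset.prod_eq_one
  intro j _
  simp [bq]

lemma eq'_nonneg {n : ℕ} (wn : Fin n → ℝ) (hw : ∀ i, 0 < wn i) {p : ℝ} (hp : 0 ≤ p) (i j : Fin n) :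
    0 ≤ eq' wn p i j := by
  unfold eq'
  have : 0 ≤ wn i * wn j * p := mul_nonneg (mul_pos (hw i) (hw j)).le hp
  have := Real.exp_le_one_iff.mpr (neg_nonpos.mpr this)
  linarith

lemma eq'_le_one {n : ℕ} (wn : Fin n → ℝ) (p : ℝ) (i j : Fin n) : eq' wn p i j ≤ 1 := by
  unfold eq'
  have := Real.exp_pos (-(wn i * wn j * p))
  linarith

lemma bq_nonneg {q : ℝ} (h0 : 0 ≤ q) (h1 : q ≤ 1) (x : Bool) : 0 ≤ bq q x := by
  unfold bq; split_ifs <;> linarith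

lemma wt_nonneg {n : ℕ} (wn : Fin n → ℝ) (hw : ∀ i, 0 < wn i) {p : ℝ} (hp : 0 ≤ p)
    (g : Fin n → Fin n → Bool) : 0 ≤ wt wn p g :=
  Finset.prod_nonneg fun i _ => Finset.prod_nonneg fun j _ =>
    bq_nonneg (eq'_nonneg wn hw hp i j) (eq'_le_one wn p i j) _

/-! ### Expectation -/

/-- expectation, as a finite sum -/
noncomputable def EX {n : ℕ} (wn : Fin n → ℝ) (p : ℝ)
    (H : (Fin n → Fin n → Bool) → Equiv.Perm (Fin n) → ℝ) : ℝ :=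
  ∑ σ, sbP wn σ * ∑ g, wt wn p g * H g σ

lemma bern_singleton {q : ℝ} (x : Bool) : bern q {x} = ENNReal.ofReal (bq q x) := by
  unfold bern bq
  cases x <;> simp

lemma bern_finite (q : ℝ) : IsFiniteMeasure (bern q) := by
  constructor
  unfold bern
  simp

lemma graphMeasure_singleton {n : ℕ} (wn : Fin n → ℝ) (hw : ∀ i, 0 < wn i) {p : ℝ} (hp : 0 ≤ p)
    (g : Fin n → Fin n → Bool) : graphMeasure n wn p {g} = ENNReal.ofReal (wt wn p g) := by
  have : ∀ q, IsFiniteMeasure (bern q) := bern_finite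
  unfold graphMeasure wt
  rw [Measure.pi_singleton, ENNReal.ofReal_prod_of_nonneg]
  · apply Finset.prod_congr rfl
    intro i _
    rw [Measure.pi_singleton, ENNReal.ofReal_prod_of_nonneg]
    · apply Finset.prod_congr rfl
      intro j _
      exact bern_singleton _
    · intro j _
      exact bq_nonneg (eq'_nonneg wn hw hp i j) (eq'_le_one wn p i j) _
  · intro i _
    exact Finset.prod_nonneg fun j _ =>
      bq_nonneg (eq'_nonneg wn hw hp i j) (eq'_le_one wn p i j) _

lemma graphMeasure_finite {n : ℕ} (wn : Fin n → ℝ) (p : ℝ) :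
    IsFiniteMeasure (graphMeasure n wn p) := by
  have : ∀ q, IsFiniteMeasure (bern q) := bern_finite
  unfold graphMeasure
  infer_instance

lemma exp_finite {n : ℕ} (wn : Fin n → ℝ) (p : ℝ) :
    IsFiniteMeasure (expMeasure' n wn p) := by
  have := graphMeasure_finite wn p
  unfold expMeasure'
  rw [Measure.sum_fintype]
  constructor
  rw [Measure.finsetSum_apply]
  apply ENNReal.sum_lt_top.mpr
  intro σ _
  rw [Measure.smul_apply, smul_eq_mul]
  exact ENNReal.mul_lt_top ENNReal.ofReal_lt_top (measure_lt_top _ _)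

lemma integral_expM {n : ℕ} (wn : Fin n → ℝ) (hw : ∀ i, 0 < wn i) {p : ℝ} (hp : 0 ≤ p)
    (H : (Fin n → Fin n → Bool) × (Fin n → Fin n) → ℝ) :
    ∫ x, H x ∂expMeasure' n wn p = EX wn p (fun g σ => H (g, ⇑σ)) := by
  have := graphMeasure_finite wn p
  have hintg : ∀ σ : Equiv.Perm (Fin n), Integrable H
      (ENNReal.ofReal (sbP wn σ) • (graphMeasure n wn p).map (fun g => (g, ⇑σ))) := by
    intro σ
    apply Integrable.smul_measure _ ENNReal.ofReal_ne_top
    exact Integrable.of_finite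
  have he : expMeasure' n wn p = Measure.sum fun σ : Equiv.Perm (Fin n) =>
      ENNReal.ofReal (sbP wn σ) • (graphMeasure n wn p).map (fun g => (g, ⇑σ)) := rfl
  rw [he, Measure.sum_fintype, integral_finsetSum_measure (fun σ _ => hintg σ)]
  unfold EX
  apply Finset.sum_congr rfl
  intro σ _
  rw [integral_smul_measure, integral_map (measurable_of_finite _).aemeasurable
    (Measurable.of_discrete.aestronglyMeasurable), integral_fintype Integrable.of_finite]
  rw [ENNReal.toReal_ofReal (sbP_nonneg wn hw σ), smul_eq_mul]
  congr 1
  apply Finset.sum_congr rfl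
  intro g _
  rw [Measure.real, graphMeasure_singleton wn hw hp, ENNReal.toReal_ofReal (wt_nonneg wn hw hp g),
    smul_eq_mul]

lemma measure_exp {n : ℕ} (wn : Fin n → ℝ) (hw : ∀ i, 0 < wn i) {p : ℝ} (hp : 0 ≤ p)
    (S : Set ((Fin n → Fin n → Bool) × (Fin n → Fin n))) :
    expMeasure' n wn p S
      = ENNReal.ofReal (EX wn p (fun g σ => if (g, ⇑σ) ∈ S then 1 else 0)) := by
  have := exp_finite wn p
  rw [← integral_expM wn hw hp (fun x => if x ∈ S then 1 else 0)]
  have : (fun x => if x ∈ S then (1 : ℝ) else 0) = S.indicator 1 := by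
    funext x; simp [Set.indicator]
  rw [this, integral_indicator_one (MeasurableSet.of_discrete), ofReal_measureReal]

section EXlemmas
variable {n : ℕ} (wn : Fin n → ℝ) (p : ℝ)

lemma EX_add (H H' : (Fin n → Fin n → Bool) → Equiv.Perm (Fin n) → ℝ) :
    EX wn p (fun g σ => H g σ + H' g σ) = EX wn p H + EX wn p H' := by
  unfold EX
  simp only [mul_add, Finset.sum_add_distrib]

lemma EX_mul (c : ℝ) (H : (Fin n → Fin n → Bool) → Equiv.Perm (Fin n) → ℝ) :
    EX wn p (fun g σ => c * H g σ) = c * EX wn p H := by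
  unfold EX
  simp only [Finset.mul_sum]
  refine Finset.sum_congr rfl fun σ _ => Finset.sum_congr rfl fun g _ => by ring

lemma EX_sum {ι : Type*} (s : Finset ι)
    (H : ι → (Fin n → Fin n → Bool) → Equiv.Perm (Fin n) → ℝ) :
    EX wn p (fun g σ => ∑ i ∈ s, H i g σ) = ∑ i ∈ s, EX wn p (H i) := by
  induction s using Finset.induction_on with
  | empty => simp [EX]
  | insert a s ha ih => simp only [Finset.sum_insert ha, EX_add, ih]

lemma EX_mono (hw : ∀ i, 0 < wn i) (hp : 0 ≤ p)
    {H H' : (Fin n → Fin n → Bool) → Equiv.Perm (Fin n) → ℝ} (h : ∀ g σ, H g σ ≤ H' g σ) :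
    EX wn p H ≤ EX wn p H' := by
  unfold EX
  refine Finset.sum_le_sum fun σ _ => mul_le_mul_of_nonneg_left
    (Finset.sum_le_sum fun g _ => mul_le_mul_of_nonneg_left (h g σ) (wt_nonneg wn hw hp g))
    (sbP_nonneg wn hw σ)

lemma EX_const (hw : ∀ i, 0 < wn i) (c : ℝ) :
    EX wn p (fun _ _ => c) = c := by
  unfold EX
  simp only [← Finset.sum_mul, sum_wt, sum_sbP wn hw, one_mul]

/-- expectation of functions of the order alone -/
lemma EX_perm (H : Equiv.Perm (Fin n) → ℝ) :
    EX wn p (fun _ σ => H σ) = ∑ σ, sbP wn σ * H σ := by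
  unfold EX
  simp only [← Finset.sum_mul, sum_wt, one_mul]

end EXlemmas

/-! ### Adapted functions and one-step estimates -/

/-- `F` is a function of the first `k` steps of the exploration -/
def Adp {n : ℕ} (k : ℕ) (F : (Fin n → Fin n → Bool) → Equiv.Perm (Fin n) → ℝ) : Prop :=
  ∀ g g' σ σ', SamePre k σ σ' → (∀ a b, (a ∈ pre σ k ∨ b ∈ pre σ k) → g a b = g' a b) →
    F g σ = F g' σ'

lemma pre_mono {n : ℕ} (σ : Equiv.Perm (Fin n)) {k k' : ℕ} (h : k ≤ k') : pre σ k ⊆ pre σ k' := by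
  intro j
  rw [mem_pre, mem_pre]
  rintro ⟨i, hi, rfl⟩
  exact ⟨i, by omega, rfl⟩

lemma Adp.mono {n : ℕ} {k k' : ℕ} (h : k ≤ k')
    {F : (Fin n → Fin n → Bool) → Equiv.Perm (Fin n) → ℝ} (hF : Adp k F) : Adp k' F := by
  intro g g' σ σ' hs hg
  exact hF g g' σ σ' (hs.mono h) (fun a b hab => hg a b
    (hab.imp (fun x => pre_mono σ h x) (fun x => pre_mono σ h x)))

/-- number of undiscovered neighbours -/
noncomputable def Df {n : ℕ} (k : ℕ) (g : Fin n → Fin n → Bool) (σ : Equiv.Perm (Fin n)) : ℝ :=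
  if hk : k < n then ∑ b ∈ (pre σ (k + 1))ᶜ, ed g (σ ⟨k, hk⟩) b else 0

lemma graphOf_adj {n : ℕ} (g : Fin n → Fin n → Bool) (a b : Fin n) :
    (graphOf g).Adj a b ↔ a ≠ b ∧ g (min a b) (max a b) = true := by
  unfold graphOf
  rw [SimpleGraph.fromRel_adj, min_comm b a, max_comm b a, or_self]

lemma discNbrs_eq {n : ℕ} (k : ℕ) (hk : k < n) (g : Fin n → Fin n → Bool)
    (σ : Equiv.Perm (Fin n)) : (discNbrs (graphOf g) σ k : ℝ) = Df k g σ := by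
  unfold discNbrs Df
  rw [dif_pos hk, Nat.card_eq_fintype_card, Fintype.card_subtype]
  unfold ed
  rw [Finset.sum_boole, Nat.cast_inj]
  congr 1
  ext j
  simp only [Finset.mem_filter, Finset.mem_univ, true_and, Finset.mem_compl, graphOf_adj, mem_pre]
  constructor
  · rintro ⟨⟨_, h1⟩, h2⟩
    refine ⟨?_, h1.2⟩
    rintro ⟨i, hi, he⟩
    exact h2 i i.2 (by omega) he
  · rintro ⟨h1, h2⟩
    refine ⟨⟨hk, ?_, h2⟩, ?_⟩
    · intro he
      exact h1 ⟨⟨k, hk⟩, by simp, he⟩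
    · intro i hi hik he
      exact h1 ⟨⟨i, hi⟩, by simp; omega, he⟩

lemma Adp_Df {n : ℕ} (k : ℕ) : Adp (n := n) (k + 1) (Df k) := by
  intro g g' σ σ' hs hg
  unfold Df
  split_ifs with hk
  · rw [← pre_congr hs, ← hs ⟨k, hk⟩ (by simp)]
    apply Finset.sum_congr rfl
    intro b _
    unfold ed
    have hm : σ ⟨k, hk⟩ ∈ pre σ (k + 1) := by
      rw [mem_pre]; exact ⟨⟨k, hk⟩, by simp, rfl⟩
    rw [hg]
    rcases le_total (σ ⟨k, hk⟩) b with h | h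
    · left; rwa [min_eq_left h]
    · right; rwa [max_eq_left h]
  · rfl

/-- conditional mean of the number of new neighbours given the chosen vertex -/
noncomputable def gS {n : ℕ} (wn : Fin n → ℝ) (p : ℝ) (S : Finset (Fin n)) (j : Fin n) : ℝ :=
  ∑ b ∈ (insert j S)ᶜ, eq' wn p j b

/-- average of a function of the next vertex -/
noncomputable def av {n : ℕ} (wn : Fin n → ℝ) (S : Finset (Fin n)) (h : Fin n → ℝ) : ℝ :=
  ∑ j ∈ Sᶜ, wn j / ((∑ k, wn k) - ∑ k ∈ S, wn k) * h j

lemma Adp_av {n : ℕ} (k : ℕ) (h : Finset (Fin n) → ℝ) : Adp k (fun _ σ => h (pre σ k)) := by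
  intro g g' σ σ' hs _
  simp only
  rw [pre_congr hs]

lemma EX_step_eq {n : ℕ} (wn : Fin n → ℝ) (hw : ∀ i, 0 < wn i) (p : ℝ) {k : ℕ} (hk : k < n)
    (F : (Fin n → Fin n → Bool) → Equiv.Perm (Fin n) → ℝ) (hF : Adp k F)
    (h : Finset (Fin n) → Fin n → ℝ) :
    EX wn p (fun g σ => F g σ * h (pre σ k) (σ ⟨k, hk⟩))
      = EX wn p (fun g σ => F g σ * av wn (pre σ k) (h (pre σ k))) := by
  have := sb_step wn hw hk (fun σ j => (∑ g, wt wn p g * F g σ) * h (pre σ k) j) (by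
    intro σ σ' hs
    funext j
    rw [pre_congr hs]
    congr 1
    apply Finset.sum_congr rfl
    intro g _
    rw [hF g g σ σ' hs (fun _ _ _ => rfl)])
  unfold EX
  simp only [← mul_assoc, ← Finset.sum_mul] at this ⊢
  rw [this]
  apply Finset.sum_congr rfl
  intro σ _
  unfold av
  rw [mul_assoc, Finset.mul_sum, Finset.mul_sum, Finset.mul_sum, Wpre_eq_sum_pre]
  apply Finset.sum_congr rfl
  intro j _
  ring

lemma EX_step_le {n : ℕ} (wn : Fin n → ℝ) (hw : ∀ i, 0 < wn i) {p : ℝ} (hp : 0 ≤ p) {k : ℕ}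
    (hk : k < n) (F : (Fin n → Fin n → Bool) → Equiv.Perm (Fin n) → ℝ) (hF : Adp k F)
    (hF0 : ∀ g σ, 0 ≤ F g σ) (h : Finset (Fin n) → Fin n → ℝ) (C : ℝ)
    (hC : ∀ S : Finset (Fin n), S.card ≤ k → av wn S (h S) ≤ C) :
    EX wn p (fun g σ => F g σ * h (pre σ k) (σ ⟨k, hk⟩)) ≤ C * EX wn p F := by
  rw [EX_step_eq wn hw p hk F hF h, ← EX_mul]
  apply EX_mono wn p hw hp
  intro g σ
  rw [mul_comm C]
  exact mul_le_mul_of_nonneg_left (hC _ (card_pre_le σ k)) (hF0 g σ)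

/-- integrating out the edges discovered at step `k` -/
lemma EX_Df_exp {n : ℕ} (wn : Fin n → ℝ) (hw : ∀ i, 0 < wn i) {p : ℝ} (hp : 0 ≤ p) {k : ℕ}
    (hk : k < n) (F : (Fin n → Fin n → Bool) → Equiv.Perm (Fin n) → ℝ) (hF : Adp k F)
    (hF0 : ∀ g σ, 0 ≤ F g σ) (lam : ℝ) :
    EX wn p (fun g σ => F g σ * Real.exp (lam * Df k g σ))
      ≤ EX wn p (fun g σ => F g σ *
          Real.exp ((Real.exp lam - 1) * gS wn p (pre σ k) (σ ⟨k, hk⟩))) := by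
  unfold EX
  apply Finset.sum_le_sum
  intro σ _
  apply mul_le_mul_of_nonneg_left _ (sbP_nonneg wn hw σ)
  simp only [Df, dif_pos hk]
  rw [sum_exp_edges wn p _ lam _ (fun g => F g σ)]
  · simp only [← mul_assoc, ← Finset.sum_mul]
    rw [mul_comm]
    apply mul_le_mul_of_nonneg_left
    · unfold gS
      rw [Finset.mul_sum, Real.exp_sum, pre_succ σ k hk]
      apply Finset.prod_le_prod
      · intro b _
        have h0 := eq'_nonneg wn hw hp (σ ⟨k, hk⟩) b
        have h1 := eq'_le_one wn p (σ ⟨k, hk⟩) b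
        have := Real.exp_pos lam
        nlinarith [mul_nonneg h0 this.le]
      · intro b _
        have := Real.add_one_le_exp ((Real.exp lam - 1) * eq' wn p (σ ⟨k, hk⟩) b)
        linarith
    · exact Finset.sum_nonneg fun g _ => mul_nonneg (wt_nonneg wn hw hp g) (hF0 g σ)
  · intro b hb g
    apply hF _ _ _ _ (fun _ _ => rfl)
    intro x y hxy
    unfold flipc
    rw [if_neg]
    rintro ⟨rfl, rfl⟩
    have hb' : b ∉ pre σ k := fun h => (Finset.mem_compl.mp hb) (pre_mono σ (Nat.le_succ k) h)
    have hs : σ ⟨k, hk⟩ ∉ pre σ k := by rw [not_mem_pre]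
    rcases le_total (σ ⟨k, hk⟩) b with h | h
    · rw [min_eq_left h, max_eq_right h] at hxy
      tauto
    · rw [min_eq_right h, max_eq_left h] at hxy
      tauto

lemma EX_Df {n : ℕ} (wn : Fin n → ℝ) (hw : ∀ i, 0 < wn i) (p : ℝ) {k : ℕ} (hk : k < n) :
    EX wn p (Df k) = EX wn p (fun _ σ => av wn (pre σ k) (gS wn p (pre σ k))) := by
  have h1 := EX_step_eq wn hw p hk (fun _ _ => 1) (fun _ _ _ _ _ _ => rfl) (gS wn p)
  simp only [one_mul] at h1
  rw [← h1, EX_perm]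
  unfold EX
  apply Finset.sum_congr rfl
  intro σ _
  congr 1
  simp only [Df, dif_pos hk, Finset.mul_sum]
  rw [Finset.sum_comm]
  simp only [sum_lin_edge, sum_wt, mul_one]
  unfold gS
  rw [pre_succ σ k hk]

/-- the step estimate for the martingale part of `L⁰` -/
lemma EX_N_step {n : ℕ} (wn : Fin n → ℝ) (hw : ∀ i, 0 < wn i) {p : ℝ} (hp : 0 ≤ p) {k : ℕ}
    (hk : k < n) (F : (Fin n → Fin n → Bool) → Equiv.Perm (Fin n) → ℝ) (hF : Adp k F)
    (hF0 : ∀ g σ, 0 ≤ F g σ) (lam C : ℝ)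
    (hC : ∀ S : Finset (Fin n), S.card ≤ k → av wn S (fun j => Real.exp
      ((Real.exp lam - 1) * gS wn p S j - lam * av wn S (gS wn p S))) ≤ C) :
    EX wn p (fun g σ => F g σ *
        Real.exp (lam * (Df k g σ - av wn (pre σ k) (gS wn p (pre σ k))))) ≤ C * EX wn p F := by
  have h1 := EX_Df_exp wn hw hp hk
    (fun g σ => F g σ * Real.exp (-(lam * av wn (pre σ k) (gS wn p (pre σ k)))))
    (by
      intro g g' σ σ' hs hg
      simp only
      rw [hF g g' σ σ' hs hg, pre_congr hs])
    (fun g σ => mul_nonneg (hF0 g σ) (Real.exp_pos _).le) lam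
  have h2 := EX_step_le wn hw hp hk F hF hF0 (fun S j => Real.exp
      ((Real.exp lam - 1) * gS wn p S j - lam * av wn S (gS wn p S))) C hC
  refine le_trans (le_of_eq ?_) (h1.trans (le_trans (le_of_eq ?_) h2))
  · congr 1; funext g σ
    rw [mul_assoc, ← Real.exp_add]; congr 2; ring
  · congr 1; funext g σ
    rw [mul_assoc, ← Real.exp_add]; congr 2; ring

/-- maximal inequality -/
lemma EX_maximal {n : ℕ} (wn : Fin n → ℝ) (hw : ∀ i, 0 < wn i) {p : ℝ} (hp : 0 ≤ p)
    (l K : ℕ) (Z : ℕ → (Fin n → Fin n → Bool) → Equiv.Perm (Fin n) → ℝ)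
    (hZ : ∀ k, Adp (l + k) (Z k)) (hZ0 : ∀ g σ, Z 0 g σ = 0) (c x : ℝ) (hc : 0 ≤ c)
    (hstep : ∀ k < K, ∀ F, Adp (l + k) F → (∀ g σ, 0 ≤ F g σ) →
      EX wn p (fun g σ => F g σ * Real.exp (Z (k + 1) g σ - Z k g σ)) ≤ Real.exp c * EX wn p F) :
    EX wn p (fun g σ => if ∃ k ≤ K, x ≤ Z k g σ then 1 else 0) ≤ Real.exp (-x + c * K) := by
  have key : ∀ k ≤ K, EX wn p (fun g σ => if ∃ j ≤ k, x ≤ Z j g σ then Real.exp x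
      else Real.exp (Z k g σ)) ≤ Real.exp (c * k) := by
    intro k
    induction k with
    | zero =>
      intro _
      refine (EX_mono wn p hw hp (H' := fun _ _ => 1) ?_).trans ?_
      · intro g σ
        split_ifs with h
        · obtain ⟨j, hj, hx⟩ := h
          have : j = 0 := by omega
          rw [this, hZ0] at hx
          exact Real.exp_le_one_iff.mpr hx
        · rw [hZ0]; simp
      · rw [EX_const wn p hw]; simp
    | succ k ih =>
      intro hk
      have ih := ih (by omega)
      set Fb : (Fin n → Fin n → Bool) → Equiv.Perm (Fin n) → ℝ :=
        fun g σ => if ∃ j ≤ k, x ≤ Z j g σ then Real.exp x else 0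
      set Fg : (Fin n → Fin n → Bool) → Equiv.Perm (Fin n) → ℝ :=
        fun g σ => if ∃ j ≤ k, x ≤ Z j g σ then 0 else Real.exp (Z k g σ) with hFg
      have hFb0 : 0 ≤ EX wn p Fb := by
        rw [← EX_const wn p hw 0]
        apply EX_mono wn p hw hp
        intro g σ
        simp only [Fb]
        split_ifs
        · exact (Real.exp_pos _).le
        · exact le_rfl
      have hs := hstep k (by omega) Fg (by
        intro g g' σ σ' hs hg
        have hj : ∀ j ≤ k, Z j g σ = Z j g' σ' := fun j hj =>
          (hZ j).mono (by omega) g g' σ σ' hs hg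
        have hiff : (∃ j ≤ k, x ≤ Z j g σ) ↔ (∃ j ≤ k, x ≤ Z j g' σ') :=
          ⟨fun ⟨j, h1, h2⟩ => ⟨j, h1, hj j h1 ▸ h2⟩, fun ⟨j, h1, h2⟩ => ⟨j, h1, (hj j h1).symm ▸ h2⟩⟩
        simp only [hFg, hiff, hj k le_rfl]) (by
        intro g σ
        simp only [hFg]
        split_ifs
        · exact le_rfl
        · exact (Real.exp_pos _).le)
      have h1 : EX wn p (fun g σ => if ∃ j ≤ k + 1, x ≤ Z j g σ then Real.exp x
          else Real.exp (Z (k + 1) g σ)) ≤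
          EX wn p (fun g σ => Fb g σ + Fg g σ * Real.exp (Z (k + 1) g σ - Z k g σ)) := by
        apply EX_mono wn p hw hp
        intro g σ
        simp only [Fb, Fg]
        by_cases hb : ∃ j ≤ k, x ≤ Z j g σ
        · have hb' : ∃ j ≤ k + 1, x ≤ Z j g σ := by
            obtain ⟨j, h1, h2⟩ := hb; exact ⟨j, by omega, h2⟩
          rw [if_pos hb, if_pos hb', if_pos hb]; simp
        · rw [if_neg hb, if_neg hb, ← Real.exp_add]
          simp only [zero_add, add_sub_cancel]
          split_ifs with h
          · obtain ⟨j, h1, h2⟩ := h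
            have : j = k + 1 := by
              by_contra hne
              exact hb ⟨j, by omega, h2⟩
            rw [this] at h2
            exact Real.exp_le_exp.mpr h2
          · exact le_rfl
      have h2 : EX wn p Fb + EX wn p Fg = EX wn p (fun g σ => if ∃ j ≤ k, x ≤ Z j g σ then
          Real.exp x else Real.exp (Z k g σ)) := by
        rw [← EX_add]
        congr 1; funext g σ
        simp only [Fb, Fg]
        split_ifs <;> simp
      rw [EX_add] at h1
      have hexp : 1 ≤ Real.exp c := Real.one_le_exp hc
      calc _ ≤ _ := h1
        _ ≤ Real.exp c * EX wn p Fb + Real.exp c * EX wn p Fg := by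
          apply add_le_add _ hs
          nlinarith
        _ = Real.exp c * (EX wn p Fb + EX wn p Fg) := by ring
        _ ≤ Real.exp c * Real.exp (c * k) := by
          rw [h2]; exact mul_le_mul_of_nonneg_left ih (Real.exp_pos _).le
        _ = Real.exp (c * ((k + 1 : ℕ) : ℝ)) := by
          rw [← Real.exp_add]; congr 1; push_cast; ring
  have hK := key K le_rfl
  have h3 : Real.exp x * EX wn p (fun g σ => if ∃ k ≤ K, x ≤ Z k g σ then 1 else 0)
      ≤ Real.exp (c * K) := by
    rw [← EX_mul]
    refine le_trans (EX_mono wn p hw hp ?_) hK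
    intro g σ
    split_ifs
    · simp
    · simpa using (Real.exp_pos _).le
  rw [Real.exp_add, Real.exp_neg, ← div_eq_inv_mul, le_div_iff₀ (Real.exp_pos _), mul_comm]
  exact h3

/-! ### Deterministic estimates for fixed `n` -/

/-- truncated squared weight -/
noncomputable def xi {n : ℕ} (wn : Fin n → ℝ) (h : ℝ) (j : Fin n) : ℝ :=
  if wn j ≤ h then wn j ^ 2 else 0

/-- martingale part of the explored squared weights -/
noncomputable def Mi {n : ℕ} (wn : Fin n → ℝ) (h : ℝ) (i : ℕ) (σ : Equiv.Perm (Fin n)) : ℝ :=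
  ∑ j ∈ pre σ i, xi wn h j - ∑ k ∈ Finset.range i, av wn (pre σ k) (xi wn h)

section det
variable {n : ℕ} (wn : Fin n → ℝ)

lemma av_add (S : Finset (Fin n)) (h h' : Fin n → ℝ) :
    av wn S (fun j => h j + h' j) = av wn S h + av wn S h' := by
  unfold av; simp only [mul_add, Finset.sum_add_distrib]

lemma av_mul (S : Finset (Fin n)) (c : ℝ) (h : Fin n → ℝ) :
    av wn S (fun j => c * h j) = c * av wn S h := by
  unfold av; rw [Finset.mul_sum]; exact Finset.sum_congr rfl fun j _ => by ring

lemma sub_sum (S : Finset (Fin n)) : (∑ k, wn k) - ∑ k ∈ S, wn k = ∑ k ∈ Sᶜ, wn k := by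
  rw [← Finset.sum_add_sum_compl S]; ring

lemma av_one (S : Finset (Fin n)) (h : 0 < (∑ k, wn k) - ∑ k ∈ S, wn k) :
    av wn S (fun _ => 1) = 1 := by
  unfold av
  simp only [mul_one]
  rw [← Finset.sum_div, ← sub_sum, div_self h.ne']

lemma av_mono (hw : ∀ i, 0 < wn i) (S : Finset (Fin n)) (h : 0 < (∑ k, wn k) - ∑ k ∈ S, wn k)
    {f f' : Fin n → ℝ} (hf : ∀ j, f j ≤ f' j) : av wn S f ≤ av wn S f' := by
  unfold av
  exact Finset.sum_le_sum fun j _ => mul_le_mul_of_nonneg_left (hf j) (div_nonneg (hw j).le h.le)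

lemma av_nonneg (hw : ∀ i, 0 < wn i) (S : Finset (Fin n)) (h : 0 < (∑ k, wn k) - ∑ k ∈ S, wn k)
    {f : Fin n → ℝ} (hf : ∀ j, 0 ≤ f j) : 0 ≤ av wn S f := by
  unfold av
  exact Finset.sum_nonneg fun j _ => mul_nonneg (div_nonneg (hw j).le h.le) (hf j)

lemma av_le (hw : ∀ i, 0 < wn i) (S : Finset (Fin n)) (hl : 0 < ∑ k, wn k)
    (h : ∑ k ∈ S, wn k ≤ (∑ k, wn k) / 2)
    {f : Fin n → ℝ} (hf : ∀ j, 0 ≤ f j) {B : ℝ} (hB : ∑ j, wn j * f j ≤ B * ∑ k, wn k) :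
    av wn S f ≤ 2 * B := by
  have hd : 0 < (∑ k, wn k) - ∑ k ∈ S, wn k := by linarith
  unfold av
  have h1 : ∑ j ∈ Sᶜ, wn j / ((∑ k, wn k) - ∑ k ∈ S, wn k) * f j
      = (∑ j ∈ Sᶜ, wn j * f j) / ((∑ k, wn k) - ∑ k ∈ S, wn k) := by
    rw [Finset.sum_div]; exact Finset.sum_congr rfl fun j _ => by ring
  have h2 : ∑ j ∈ Sᶜ, wn j * f j ≤ ∑ j, wn j * f j :=
    Finset.sum_le_sum_of_subset_of_nonneg (Finset.subset_univ _)
      fun j _ _ => mul_nonneg (hw j).le (hf j)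
  rw [h1, div_le_iff₀ hd]
  have h3 : 0 ≤ ∑ j, wn j * f j := Finset.sum_nonneg fun j _ => mul_nonneg (hw j).le (hf j)
  have hB0 : 0 ≤ B := by
    by_contra hneg
    have : B * ∑ k, wn k < 0 := mul_neg_of_neg_of_pos (not_le.mp hneg) hl
    linarith
  nlinarith

/-- exponential moment estimate -/
lemma av_exp_le (hw : ∀ i, 0 < wn i) (S : Finset (Fin n))
    (h : 0 < (∑ k, wn k) - ∑ k ∈ S, wn k) (t : ℝ) (f : Fin n → ℝ) (hf : ∀ j, |t * f j| ≤ 1)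
    {V : ℝ} (hV : av wn S (fun j => f j ^ 2) ≤ V) :
    av wn S (fun j => Real.exp (t * f j)) ≤ Real.exp (t * av wn S f + t ^ 2 * V) := by
  have h1 : av wn S (fun j => Real.exp (t * f j))
      ≤ av wn S (fun j => (1 + t * f j) + t ^ 2 * f j ^ 2) := by
    apply av_mono wn hw S h
    intro j
    have := (abs_le.mp (Real.abs_exp_sub_one_sub_id_le (hf j))).2
    nlinarith
  rw [av_add, av_add, av_one wn S h, av_mul, av_mul] at h1
  have h2 := Real.add_one_le_exp (t * av wn S f + t ^ 2 * V)
  nlinarith [mul_le_mul_of_nonneg_left hV (sq_nonneg t)]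

lemma eq'_le (p : ℝ) (i j : Fin n) : eq' wn p i j ≤ wn i * wn j * p := by
  unfold eq'
  have := Real.add_one_le_exp (-(wn i * wn j * p))
  linarith

lemma eq'_ge (hw : ∀ i, 0 < wn i) {p : ℝ} (hp : 0 ≤ p) (i j : Fin n) :
    wn i * wn j * p - (wn i * wn j * p) ^ 2 ≤ eq' wn p i j := by
  unfold eq'
  have h0 : 0 ≤ wn i * wn j * p := mul_nonneg (mul_pos (hw i) (hw j)).le hp
  set x := wn i * wn j * p
  have h1 : Real.exp (-x) ≤ 1 - x + x ^ 2 := by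
    rw [Real.exp_neg, inv_le_iff_one_le_mul₀ (Real.exp_pos x)]
    have h2 := Real.add_one_le_exp x
    nlinarith [pow_nonneg h0 3, mul_le_mul_of_nonneg_left h2 (by nlinarith [sq_nonneg (x - 1)] :
      0 ≤ 1 - x + x ^ 2)]
  linarith

lemma gS_nonneg (hw : ∀ i, 0 < wn i) {p : ℝ} (hp : 0 ≤ p) (S : Finset (Fin n)) (j : Fin n) :
    0 ≤ gS wn p S j := Finset.sum_nonneg fun b _ => eq'_nonneg wn hw hp j b

lemma gS_le (hw : ∀ i, 0 < wn i) {p : ℝ} (hp : 0 ≤ p) (hpl : p * ∑ k, wn k ≤ 2)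
    (S : Finset (Fin n)) (j : Fin n) : gS wn p S j ≤ 2 * wn j := by
  unfold gS
  calc ∑ b ∈ (insert j S)ᶜ, eq' wn p j b ≤ ∑ b ∈ (insert j S)ᶜ, wn j * wn b * p :=
        Finset.sum_le_sum fun b _ => eq'_le wn p j b
    _ ≤ ∑ b, wn j * wn b * p :=
        Finset.sum_le_sum_of_subset_of_nonneg (Finset.subset_univ _)
          fun b _ _ => mul_nonneg (mul_pos (hw j) (hw b)).le hp
    _ = wn j * (p * ∑ k, wn k) := by
        rw [Finset.mul_sum, Finset.mul_sum]; exact Finset.sum_congr rfl fun b _ => by ring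
    _ ≤ 2 * wn j := by nlinarith [hw j]

/-- step bound for the martingale part of `L⁰` -/
lemma N_step_bound (hw : ∀ i, 0 < wn i) {p C bet lam : ℝ} (hp : 0 ≤ p) (hl : 0 < ∑ k, wn k)
    (hpl : p * ∑ k, wn k ≤ 2) (h2 : ∑ k, wn k ^ 2 ≤ C * ∑ k, wn k)
    (h3 : ∑ k, wn k ^ 3 ≤ C * ∑ k, wn k) (hbet : ∀ j, wn j ≤ bet)
    (hlam : |lam| ≤ 1) (hlb : 4 * |lam| * bet ≤ 1)
    (S : Finset (Fin n)) (hS : ∑ k ∈ S, wn k ≤ (∑ k, wn k) / 2) :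
    av wn S (fun j => Real.exp
      ((Real.exp lam - 1) * gS wn p S j - lam * av wn S (gS wn p S)))
      ≤ Real.exp (36 * C * lam ^ 2) := by
  have hd : 0 < (∑ k, wn k) - ∑ k ∈ S, wn k := by linarith
  have hg0 := gS_nonneg wn hw hp S
  have hg1 := gS_le wn hw hp hpl S
  have hphi : av wn S (gS wn p S) ≤ 2 * (2 * C) := by
    apply av_le wn hw S hl hS hg0
    calc ∑ j, wn j * gS wn p S j ≤ ∑ j, 2 * wn j ^ 2 :=
          Finset.sum_le_sum fun j _ => by nlinarith [hw j, hg1 j]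
      _ ≤ 2 * C * ∑ k, wn k := by rw [← Finset.mul_sum]; linarith
  have hphi0 : 0 ≤ av wn S (gS wn p S) := av_nonneg wn hw S hd hg0
  have hv : av wn S (fun j => gS wn p S j ^ 2) ≤ 2 * (4 * C) := by
    apply av_le wn hw S hl hS (fun j => sq_nonneg _)
    calc ∑ j, wn j * gS wn p S j ^ 2 ≤ ∑ j, 4 * wn j ^ 3 :=
          Finset.sum_le_sum fun j _ => by
            have : gS wn p S j ^ 2 ≤ (2 * wn j) ^ 2 := pow_le_pow_left₀ (hg0 j) (hg1 j) 2
            nlinarith [hw j]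
      _ ≤ 4 * C * ∑ k, wn k := by rw [← Finset.mul_sum]; linarith
  have hmu := Real.abs_exp_sub_one_le hlam
  have hml := (abs_le.mp (Real.abs_exp_sub_one_sub_id_le hlam)).2
  have h1 := av_exp_le wn hw S hd (Real.exp lam - 1) (gS wn p S) (by
    intro j
    rw [abs_mul, abs_of_nonneg (hg0 j)]
    calc |Real.exp lam - 1| * gS wn p S j ≤ (2 * |lam|) * (2 * bet) := by
          apply mul_le_mul hmu ((hg1 j).trans (by linarith [hbet j])) (hg0 j) (by positivity)
      _ ≤ 1 := by linarith) hv
  have h4 : av wn S (fun j => Real.exp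
      ((Real.exp lam - 1) * gS wn p S j - lam * av wn S (gS wn p S)))
      = Real.exp (-(lam * av wn S (gS wn p S))) *
        av wn S (fun j => Real.exp ((Real.exp lam - 1) * gS wn p S j)) := by
    rw [← av_mul wn S (Real.exp (-(lam * av wn S (gS wn p S))))]; congr 1; funext j; rw [← Real.exp_add]; congr 1; ring
  rw [h4]
  refine (mul_le_mul_of_nonneg_left h1 (Real.exp_pos _).le).trans ?_
  rw [← Real.exp_add]
  apply Real.exp_le_exp.mpr
  have hsq : (Real.exp lam - 1) ^ 2 ≤ 4 * lam ^ 2 := by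
    rw [← sq_abs (Real.exp lam - 1), ← sq_abs lam]
    nlinarith [abs_nonneg (Real.exp lam - 1), abs_nonneg lam]
  have hC0 : 0 ≤ C := by linarith
  nlinarith [mul_le_mul_of_nonneg_right hml hphi0, mul_le_mul_of_nonneg_left hphi (sq_nonneg lam),
    mul_le_mul_of_nonneg_right hsq hC0]

lemma xi_nonneg (h : ℝ) (j : Fin n) : 0 ≤ xi wn h j := by
  unfold xi; split_ifs
  · positivity
  · exact le_rfl

lemma xi_le (h : ℝ) (j : Fin n) : xi wn h j ≤ wn j ^ 2 := by
  unfold xi; split_ifs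
  · exact le_rfl
  · positivity

lemma xi_le' (hw : ∀ i, 0 < wn i) {h bet : ℝ} (hh : 0 ≤ h) (hbet : ∀ j, wn j ≤ bet) (j : Fin n) :
    xi wn h j ≤ h * bet := by
  have hb0 : 0 ≤ bet := (hw j).le.trans (hbet j)
  unfold xi; split_ifs with hj
  · rw [sq]; exact mul_le_mul hj (hbet j) (hw j).le hh
  · positivity

/-- step bound for the martingale part of the explored squared weights -/
lemma M_step_bound (hw : ∀ i, 0 < wn i) {C bet h s : ℝ} (hl : 0 < ∑ k, wn k)
    (h3 : ∑ k, wn k ^ 3 ≤ C * ∑ k, wn k) (hbet : ∀ j, wn j ≤ bet) (hb0 : 0 ≤ bet) (hh : 0 ≤ h)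
    (hs : |s| * (h * bet) ≤ 1)
    (S : Finset (Fin n)) (hS : ∑ k ∈ S, wn k ≤ (∑ k, wn k) / 2) :
    av wn S (fun j => Real.exp (s * (xi wn h j - av wn S (xi wn h))))
      ≤ Real.exp (2 * C * h * bet * s ^ 2) := by
  have hd : 0 < (∑ k, wn k) - ∑ k ∈ S, wn k := by linarith
  have hv : av wn S (fun j => xi wn h j ^ 2) ≤ 2 * (h * bet * C) := by
    apply av_le wn hw S hl hS (fun j => sq_nonneg _)
    calc ∑ j, wn j * xi wn h j ^ 2 ≤ ∑ j, h * bet * wn j ^ 3 :=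
          Finset.sum_le_sum fun j _ => by
            have h1 := xi_le wn h j
            have h2 := xi_le' wn hw hh hbet j
            have h0 := xi_nonneg wn h j
            have : xi wn h j ^ 2 ≤ (h * bet) * wn j ^ 2 := by
              rw [sq]; exact mul_le_mul h2 h1 h0 (by positivity)
            nlinarith [hw j]
      _ ≤ h * bet * C * ∑ k, wn k := by
          rw [← Finset.mul_sum]
          have := mul_le_mul_of_nonneg_left h3 (by positivity : 0 ≤ h * bet)
          linarith
  have h1 := av_exp_le wn hw S hd s (xi wn h) (by
    intro j
    rw [abs_mul, abs_of_nonneg (xi_nonneg wn h j)]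
    exact (mul_le_mul_of_nonneg_left (xi_le' wn hw hh hbet j) (abs_nonneg s)).trans hs) hv
  have h4 : av wn S (fun j => Real.exp (s * (xi wn h j - av wn S (xi wn h))))
      = Real.exp (-(s * av wn S (xi wn h))) * av wn S (fun j => Real.exp (s * xi wn h j)) := by
    rw [← av_mul wn S (Real.exp (-(s * av wn S (xi wn h))))]; congr 1; funext j; rw [← Real.exp_add]; congr 1; ring
  rw [h4]
  refine (mul_le_mul_of_nonneg_left h1 (Real.exp_pos _).le).trans ?_
  rw [← Real.exp_add]
  apply Real.exp_le_exp.mpr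
  linarith

/-- approximation of the conditional mean -/
lemma phi_approx (hw : ∀ i, 0 < wn i) {p C : ℝ} (hp : 0 ≤ p) (hl : 0 < ∑ k, wn k)
    (hpl : p * ∑ k, wn k ≤ 2) (hC : 1 ≤ C) (h2 : ∑ k, wn k ^ 2 ≤ C * ∑ k, wn k)
    (h3 : ∑ k, wn k ^ 3 ≤ C * ∑ k, wn k)
    (S : Finset (Fin n)) (hS : ∑ k ∈ S, wn k ≤ (∑ k, wn k) / 2) :
    |av wn S (gS wn p S) - p * ∑ j ∈ Sᶜ, wn j ^ 2| ≤ 12 * C ^ 2 / ∑ k, wn k := by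
  have hd : 0 < (∑ k, wn k) - ∑ k ∈ S, wn k := by linarith
  set L := ∑ k, wn k with hL
  have hmain : p * ∑ j ∈ Sᶜ, wn j ^ 2 = av wn S (fun j => ∑ b ∈ Sᶜ, wn j * wn b * p) := by
    unfold av
    rw [Finset.mul_sum]
    apply Finset.sum_congr rfl
    intro j _
    have : ∑ b ∈ Sᶜ, wn j * wn b * p = wn j * p * (L - ∑ k ∈ S, wn k) := by
      rw [hL, sub_sum, Finset.mul_sum]; exact Finset.sum_congr rfl fun b _ => by ring
    show p * wn j ^ 2 = wn j / (L - ∑ k ∈ S, wn k) * ∑ b ∈ Sᶜ, wn j * wn b * p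
    rw [this]
    field_simp
  have hup : av wn S (gS wn p S) ≤ p * ∑ j ∈ Sᶜ, wn j ^ 2 := by
    rw [hmain]
    apply av_mono wn hw S hd
    intro j
    unfold gS
    refine (Finset.sum_le_sum fun b _ => eq'_le wn p j b).trans ?_
    apply Finset.sum_le_sum_of_subset_of_nonneg
    · exact Finset.compl_subset_compl.mpr (Finset.subset_insert _ _)
    · exact fun b _ _ => mul_nonneg (mul_pos (hw j) (hw b)).le hp
  have hpL : p ≤ 2 / L := by rw [le_div_iff₀ hl]; exact hpl
  set e : Fin n → ℝ := fun j => wn j ^ 2 * p + wn j ^ 2 * p ^ 2 * ∑ b, wn b ^ 2 with he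
  have hlow : p * ∑ j ∈ Sᶜ, wn j ^ 2 ≤ av wn S (gS wn p S) + av wn S e := by
    rw [hmain, ← av_add]
    apply av_mono wn hw S hd
    intro j
    have h5 : ∑ b ∈ Sᶜ, wn j * wn b * p ≤ wn j ^ 2 * p + ∑ b ∈ (insert j S)ᶜ, wn j * wn b * p := by
      have hsub : Sᶜ ⊆ insert j ((insert j S)ᶜ) := by
        intro b hb
        simp only [Finset.mem_insert, Finset.mem_compl] at hb ⊢
        tauto
      refine (Finset.sum_le_sum_of_subset_of_nonneg hsub
        fun b _ _ => mul_nonneg (mul_pos (hw j) (hw b)).le hp).trans ?_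
      rw [Finset.sum_insert (by simp), sq]
    have h6 : ∑ b ∈ (insert j S)ᶜ, wn j * wn b * p ≤ gS wn p S j
        + wn j ^ 2 * p ^ 2 * ∑ b, wn b ^ 2 := by
      have h7 : ∑ b ∈ (insert j S)ᶜ, (wn j * wn b * p) ^ 2 ≤ wn j ^ 2 * p ^ 2 * ∑ b, wn b ^ 2 := by
        refine (Finset.sum_le_sum_of_subset_of_nonneg (Finset.subset_univ _)
          fun b _ _ => sq_nonneg _).trans (le_of_eq ?_)
        rw [Finset.mul_sum]; exact Finset.sum_congr rfl fun b _ => by ring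
      refine le_trans ?_ (add_le_add_right h7 _)
      unfold gS
      rw [← Finset.sum_add_distrib]
      exact Finset.sum_le_sum fun b _ => by linarith [eq'_ge wn hw hp j b]
    simp only [he]
    linarith
  have hs2 : 0 ≤ ∑ b, wn b ^ 2 := Finset.sum_nonneg fun b _ => sq_nonneg _
  have hs3 : 0 ≤ ∑ b, wn b ^ 3 := Finset.sum_nonneg fun b _ => pow_nonneg (hw b).le 3
  have hee : av wn S e ≤ 2 * (6 * C ^ 2 / L) := by
    apply av_le wn hw S hl hS
    · intro j; simp only [he]; positivity
    · have e1 : ∑ j, wn j * e j = (p + p ^ 2 * ∑ b, wn b ^ 2) * ∑ j, wn j ^ 3 := by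
        rw [Finset.mul_sum]; exact Finset.sum_congr rfl fun j _ => by simp only [he]; ring
      rw [e1]
      have e2 : p ^ 2 * ∑ b, wn b ^ 2 ≤ (2 / L) ^ 2 * (C * L) :=
        mul_le_mul (pow_le_pow_left₀ hp hpL 2) h2 hs2 (by positivity)
      have e3 : p + p ^ 2 * ∑ b, wn b ^ 2 ≤ 6 * C / L := by
        have : (2 / L) ^ 2 * (C * L) = 4 * C / L := by field_simp; ring
        have h8 : 2 / L ≤ 2 * C / L := by gcongr; linarith
        have h9 : 6 * C / L = 2 * C / L + 4 * C / L := by ring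
        linarith
      calc (p + p ^ 2 * ∑ b, wn b ^ 2) * ∑ j, wn j ^ 3 ≤ (6 * C / L) * (C * L) :=
            mul_le_mul e3 h3 hs3 (by positivity)
        _ = 6 * C ^ 2 / L * L := by ring
  have : 2 * (6 * C ^ 2 / L) = 12 * C ^ 2 / L := by ring
  rw [abs_le]
  constructor
  · linarith
  · have : 0 ≤ 12 * C ^ 2 / L := by positivity
    linarith

/-- approximation of the mean truncated squared weight -/
lemma psi_approx (hw : ∀ i, 0 < wn i) {C eta : ℝ} (hl : 0 < ∑ k, wn k)
    (hC : 1 ≤ C) (heta : 0 ≤ eta) (heta2 : eta ≤ 1 / 2)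
    (h3 : ∑ k, wn k ^ 3 ≤ C * ∑ k, wn k) (h : ℝ)
    (S : Finset (Fin n)) (hS : ∑ k ∈ S, wn k ≤ eta * ∑ k, wn k)
    (hS3 : ∑ k ∈ S, wn k ^ 3 ≤ eta * ∑ k, wn k) :
    |av wn S (xi wn h) - (∑ j, wn j * xi wn h j) / ∑ k, wn k| ≤ 2 * C * eta := by
  set L := ∑ k, wn k with hL
  set WS := ∑ k ∈ S, wn k with hWS
  have hWS0 : 0 ≤ WS := Finset.sum_nonneg fun k _ => (hw k).le
  have hd : L / 2 ≤ L - WS := by nlinarith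
  have hd0 : 0 < L - WS := by linarith
  set Xi := ∑ j, wn j * xi wn h j with hXi
  have hx0 : ∀ j, 0 ≤ wn j * xi wn h j := fun j => mul_nonneg (hw j).le (xi_nonneg wn h j)
  have hx1 : ∀ j, wn j * xi wn h j ≤ wn j ^ 3 := fun j => by nlinarith [hw j, xi_le wn h j]
  have hXi0 : 0 ≤ Xi := Finset.sum_nonneg fun j _ => hx0 j
  have hXiC : Xi ≤ C * L := (Finset.sum_le_sum fun j _ => hx1 j).trans h3
  set XS := ∑ j ∈ S, wn j * xi wn h j with hXS
  have hXS0 : 0 ≤ XS := Finset.sum_nonneg fun j _ => hx0 j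
  have hXS1 : XS ≤ eta * L := (Finset.sum_le_sum fun j _ => hx1 j).trans hS3
  have hav : av wn S (xi wn h) = (Xi - XS) / (L - WS) := by
    have : Xi - XS = ∑ j ∈ Sᶜ, wn j * xi wn h j := sub_sum (fun j => wn j * xi wn h j) S
    rw [this, Finset.sum_div]
    unfold av
    exact Finset.sum_congr rfl fun j _ => by ring
  rw [hav, div_sub_div _ _ hd0.ne' hl.ne', abs_div, abs_of_pos (mul_pos hd0 hl),
    div_le_iff₀ (mul_pos hd0 hl), abs_le]
  have hA : (Xi - XS) * L - (L - WS) * Xi = Xi * WS - XS * L := by ring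
  rw [hA]
  have hB : C * eta * L * L ≤ 2 * C * eta * ((L - WS) * L) := by
    have : 0 ≤ C * eta * L := by positivity
    nlinarith
  have hp1 : Xi * WS ≤ C * L * (eta * L) := mul_le_mul hXiC hS hWS0 (by positivity)
  have hp2 : XS * L ≤ C * eta * L * L := by
    have : eta * L ≤ C * eta * L := by nlinarith [mul_nonneg heta hl.le]
    exact mul_le_mul_of_nonneg_right (hXS1.trans this) hl.le
  constructor
  · nlinarith [mul_nonneg hXi0 hWS0]
  · nlinarith [mul_nonneg hXS0 hl.le]

end det

/-! ### Core concentration estimate for fixed `n` -/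

/-- indicator of a proposition -/
noncomputable def ind (P : Prop) : ℝ := if P then 1 else 0

lemma ind_nonneg (P : Prop) : 0 ≤ ind P := by unfold ind; split_ifs <;> norm_num

lemma ind_pos {P : Prop} (h : P) : ind P = 1 := if_pos h

/-- conditional mean of the increment -/
noncomputable def phi {n : ℕ} (wn : Fin n → ℝ) (p : ℝ) (i : ℕ) (σ : Equiv.Perm (Fin n)) : ℝ :=
  av wn (pre σ i) (gS wn p (pre σ i))

/-- martingale part of `L⁰` -/
noncomputable def Ni {n : ℕ} (wn : Fin n → ℝ) (p : ℝ) (l k : ℕ)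
    (g : Fin n → Fin n → Bool) (σ : Equiv.Perm (Fin n)) : ℝ :=
  ∑ i ∈ Finset.range k, (Df (l + i) g σ - phi wn p (l + i) σ)

section core
variable {n : ℕ} (wn : Fin n → ℝ)

lemma Adp_phi (p : ℝ) (i : ℕ) : Adp i (fun _ σ => phi wn p i σ) :=
  Adp_av i (fun S => av wn S (gS wn p S))

lemma Adp_Ni (p : ℝ) (l k : ℕ) : Adp (l + k) (Ni wn p l k) := by
  intro g g' σ σ' hs hg
  unfold Ni
  apply Finset.sum_congr rfl
  intro i hi
  have hi' := Finset.mem_range.mp hi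
  have h2 := ((Adp_phi wn p (l + i)).mono (by omega : l + i ≤ l + k)) g g' σ σ' hs hg
  simp only at h2
  rw [((Adp_Df (l + i)).mono (by omega : l + i + 1 ≤ l + k)) g g' σ σ' hs hg, h2]

lemma Adp_Mi (h : ℝ) (k : ℕ) : Adp k (fun _ σ => Mi wn h k σ) := by
  intro g g' σ σ' hs hg
  simp only [Mi]
  rw [pre_congr hs]
  congr 1
  apply Finset.sum_congr rfl
  intro i hi
  rw [pre_congr (hs.mono (Finset.mem_range.mp hi).le)]

lemma Mi_succ (h : ℝ) {k : ℕ} (hk : k < n) (σ : Equiv.Perm (Fin n)) :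
    Mi wn h (k + 1) σ = Mi wn h k σ + (xi wn h (σ ⟨k, hk⟩) - av wn (pre σ k) (xi wn h)) := by
  unfold Mi
  rw [pre_succ σ k hk, Finset.sum_insert ((not_mem_pre σ k ⟨k, hk⟩).mpr le_rfl),
    Finset.sum_range_succ]
  ring

lemma Mi_zero (h : ℝ) (σ : Equiv.Perm (Fin n)) : Mi wn h 0 σ = 0 := by
  have : pre σ 0 = ∅ := Finset.card_eq_zero.mp (Nat.le_zero.mp (card_pre_le σ 0))
  simp [Mi, this]

lemma EX_sub (p : ℝ) (H H' : (Fin n → Fin n → Bool) → Equiv.Perm (Fin n) → ℝ) :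
    EX wn p (fun g σ => H g σ - H' g σ) = EX wn p H - EX wn p H' := by
  unfold EX
  simp only [mul_sub, Finset.sum_sub_distrib]

lemma EX_Mi (hw : ∀ i, 0 < wn i) (p h : ℝ) {k : ℕ} (hk : k ≤ n) :
    EX wn p (fun _ σ => Mi wn h k σ) = 0 := by
  induction k with
  | zero => simp only [Mi_zero]; exact EX_const wn p hw 0
  | succ k ih =>
    have hk' : k < n := hk
    have h1 := EX_step_eq wn hw p hk' (fun _ _ => 1) (fun _ _ _ _ _ _ => rfl) (fun _ => xi wn h)
    simp only [one_mul] at h1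
    simp only [Mi_succ wn h hk']
    rw [EX_add, EX_sub, ih hk'.le, h1]
    ring

lemma N_max (hw : ∀ i, 0 < wn i) {p C bet lam : ℝ} (hp : 0 ≤ p) (hl : 0 < ∑ k, wn k)
    (hpl : p * ∑ k, wn k ≤ 2) (hC : 1 ≤ C) (h2 : ∑ k, wn k ^ 2 ≤ C * ∑ k, wn k)
    (h3 : ∑ k, wn k ^ 3 ≤ C * ∑ k, wn k) (hbet : ∀ j, wn j ≤ bet)
    (hlam : |lam| ≤ 1) (hlb : 4 * |lam| * bet ≤ 1) (l K : ℕ) (hn : l + K ≤ n)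
    (hS : ∀ S : Finset (Fin n), S.card ≤ l + K → ∑ k ∈ S, wn k ≤ (∑ k, wn k) / 2) (x : ℝ) :
    EX wn p (fun g σ => ind (∃ k ≤ K, x ≤ lam * Ni wn p l k g σ))
      ≤ Real.exp (-x + 36 * C * lam ^ 2 * K) := by
  refine le_trans ?_ (EX_maximal wn hw hp l K (fun k g σ => lam * Ni wn p l k g σ) ?_ ?_
    (36 * C * lam ^ 2) x (by positivity) ?_)
  · apply EX_mono wn p hw hp
    intro g σ
    unfold ind
    split_ifs <;> norm_num
  · intro k g g' σ σ' hs hg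
    simp only
    rw [Adp_Ni wn p l k g g' σ σ' hs hg]
  · intro g σ; simp [Ni]
  · intro k hk F hF hF0
    have := EX_N_step wn hw hp (by omega : l + k < n) F hF hF0 lam (Real.exp (36 * C * lam ^ 2))
      (fun S hSc => N_step_bound wn hw hp hl hpl h2 h3 hbet hlam hlb S (hS S (by omega)))
    refine le_trans (le_of_eq ?_) this
    congr 1
    funext g σ
    congr 2
    simp only [Ni, Finset.sum_range_succ, phi]
    ring

lemma M_max (hw : ∀ i, 0 < wn i) {p C bet h s : ℝ} (hp : 0 ≤ p) (hl : 0 < ∑ k, wn k)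
    (hC : 1 ≤ C)
    (h3 : ∑ k, wn k ^ 3 ≤ C * ∑ k, wn k) (hbet : ∀ j, wn j ≤ bet) (hb0 : 0 ≤ bet) (hh : 0 ≤ h)
    (hs : |s| * (h * bet) ≤ 1) (m : ℕ) (hn : m ≤ n)
    (hS : ∀ S : Finset (Fin n), S.card ≤ m → ∑ k ∈ S, wn k ≤ (∑ k, wn k) / 2) (x : ℝ) :
    EX wn p (fun _ σ => ind (∃ k ≤ m, x ≤ s * Mi wn h k σ))
      ≤ Real.exp (-x + 2 * C * h * bet * s ^ 2 * m) := by
  refine le_trans ?_ (EX_maximal wn hw hp 0 m (fun k _ σ => s * Mi wn h k σ) ?_ ?_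
    (2 * C * h * bet * s ^ 2) x (by positivity) ?_)
  · apply EX_mono wn p hw hp
    intro g σ
    unfold ind
    split_ifs <;> norm_num
  · intro k g g' σ σ' hs' hg
    rw [zero_add] at hs' hg
    have := Adp_Mi wn h k g g' σ σ' hs' hg
    simp only at this ⊢
    rw [this]
  · intro g σ; simp [Mi_zero]
  · intro k hk F hF hF0
    rw [zero_add] at hF
    have := EX_step_le wn hw hp (by omega : k < n) F hF hF0
      (fun S j => Real.exp (s * (xi wn h j - av wn S (xi wn h)))) (Real.exp (2 * C * h * bet * s ^ 2))
      (fun S hSc => M_step_bound wn hw hl h3 hbet hb0 hh hs S (hS S (by omega)))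
    refine le_trans (le_of_eq ?_) this
    congr 1
    funext g σ
    congr 2
    rw [Mi_succ wn h (by omega : k < n)]
    ring

/-- decomposition of the conditional mean -/
lemma phi_decomp (hw : ∀ i, 0 < wn i) {p C h eta : ℝ} (hp : 0 ≤ p) (hl : 0 < ∑ k, wn k)
    (hpl : p * ∑ k, wn k ≤ 2) (hC : 1 ≤ C) (h2 : ∑ k, wn k ^ 2 ≤ C * ∑ k, wn k)
    (h3 : ∑ k, wn k ^ 3 ≤ C * ∑ k, wn k) (hh : 0 < h) (heta : 0 ≤ eta) (heta2 : eta ≤ 1 / 2)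
    (m : ℕ)
    (hS : ∀ S : Finset (Fin n), S.card ≤ m → ∑ k ∈ S, wn k ≤ eta * (∑ k, wn k) ∧
      ∑ k ∈ S, wn k ^ 3 ≤ eta * (∑ k, wn k)) (i : ℕ) (hi : i ≤ m) (σ : Equiv.Perm (Fin n)) :
    |phi wn p i σ - (p * (∑ k, wn k ^ 2 - i * ((∑ j, wn j * xi wn h j) / ∑ k, wn k))
      - p * Mi wn h i σ)| ≤ 12 * C ^ 2 / (∑ k, wn k) + p * (C * (∑ k, wn k) / h + 2 * C * eta * m) := by
  have hcard : (pre σ i).card ≤ m := (card_pre_le σ i).trans hi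
  have hA := phi_approx wn hw hp hl hpl hC h2 h3 (pre σ i) ((hS _ hcard).1.trans (by nlinarith))
  set c := (∑ j, wn j * xi wn h j) / ∑ k, wn k with hc
  have hB : |∑ k ∈ Finset.range i, (av wn (pre σ k) (xi wn h) - c)| ≤ 2 * C * eta * m := by
    refine (Finset.abs_sum_le_sum_abs _ _).trans ?_
    refine (Finset.sum_le_sum (g := fun _ => 2 * C * eta) fun k hk => ?_).trans ?_
    · have hck : (pre σ k).card ≤ m := (card_pre_le σ k).trans
        ((Finset.mem_range.mp hk).le.trans hi)
      exact psi_approx wn hw hl hC heta heta2 h3 h (pre σ k) (hS _ hck).1 (hS _ hck).2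
    · rw [Finset.sum_const, Finset.card_range, nsmul_eq_mul, mul_comm]
      exact mul_le_mul_of_nonneg_left (by exact_mod_cast hi) (by positivity)
  have hD0 : 0 ≤ ∑ j ∈ pre σ i, (wn j ^ 2 - xi wn h j) :=
    Finset.sum_nonneg fun j _ => by linarith [xi_le wn h j]
  have hD1 : ∑ j ∈ pre σ i, (wn j ^ 2 - xi wn h j) ≤ C * (∑ k, wn k) / h := by
    have hterm : ∀ j, wn j ^ 2 - xi wn h j ≤ wn j ^ 3 / h := by
      intro j
      rw [le_div_iff₀ hh]
      unfold xi
      split_ifs with hj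
      · have := pow_pos (hw j) 3
        nlinarith
      · have := pow_pos (hw j) 2
        push Not at hj
        nlinarith
    refine (Finset.sum_le_sum fun j _ => hterm j).trans ?_
    refine (Finset.sum_le_sum_of_subset_of_nonneg (Finset.subset_univ _) fun j _ _ => ?_).trans ?_
    · exact div_nonneg (pow_pos (hw j) 3).le hh.le
    · rw [← Finset.sum_div]
      exact div_le_div_of_nonneg_right h3 hh.le
  have hcomp : ∑ j ∈ (pre σ i)ᶜ, wn j ^ 2 = ∑ j, wn j ^ 2 - ∑ j ∈ pre σ i, wn j ^ 2 :=
    (sub_sum (fun j => wn j ^ 2) (pre σ i)).symm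
  have hid : phi wn p i σ - (p * (∑ k, wn k ^ 2 - i * c) - p * Mi wn h i σ)
      = (av wn (pre σ i) (gS wn p (pre σ i)) - p * ∑ j ∈ (pre σ i)ᶜ, wn j ^ 2)
        + p * (-(∑ j ∈ pre σ i, (wn j ^ 2 - xi wn h j))
          - ∑ k ∈ Finset.range i, (av wn (pre σ k) (xi wn h) - c)) := by
    rw [hcomp, Finset.sum_sub_distrib, Finset.sum_sub_distrib, Finset.sum_const, Finset.card_range,
      nsmul_eq_mul]
    unfold phi Mi
    ring
  rw [hid]
  refine (abs_add_le _ _).trans (add_le_add hA ?_)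
  rw [abs_mul, abs_of_nonneg hp]
  apply mul_le_mul_of_nonneg_left _ hp
  rw [abs_le] at hB ⊢
  constructor <;> linarith [hB.1, hB.2]

lemma core_bound (hw : ∀ i, 0 < wn i) {p C h eta bet lam s x y z e : ℝ} (hp : 0 ≤ p)
    (hl : 0 < ∑ k, wn k)
    (hpl : p * ∑ k, wn k ≤ 2) (hC : 1 ≤ C) (h2 : ∑ k, wn k ^ 2 ≤ C * ∑ k, wn k)
    (h3 : ∑ k, wn k ^ 3 ≤ C * ∑ k, wn k) (hh : 0 < h) (heta : 0 ≤ eta) (heta2 : eta ≤ 1 / 2)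
    (l m : ℕ) (hlm : l ≤ m) (hmn : m < n)
    (hS : ∀ S : Finset (Fin n), S.card ≤ m → ∑ k ∈ S, wn k ≤ eta * (∑ k, wn k) ∧
      ∑ k ∈ S, wn k ^ 3 ≤ eta * (∑ k, wn k))
    (hbet : ∀ j, wn j ≤ bet) (hb0 : 0 ≤ bet) (hlam0 : 0 < lam) (hlam1 : lam ≤ 1)
    (hlb : 4 * lam * bet ≤ 1) (hs0 : 0 < s) (hsb : s * (h * bet) ≤ 1)
    (he : e = 12 * C ^ 2 / (∑ k, wn k) + p * (C * (∑ k, wn k) / h + 2 * C * eta * m))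
    (hsum : 2 * x + ((m : ℝ) - l) * (p * z + 2 * e) < y) :
    EX wn p (fun g σ => ind (∃ u v : ℕ, l ≤ u ∧ u ≤ v ∧ v ≤ m ∧
      y ≤ |∑ i ∈ Finset.Ico u v, (Df i g σ - EX wn p (Df i))|))
      ≤ 2 * Real.exp (-(lam * x) + 36 * C * lam ^ 2 * ((m : ℝ) - l))
        + 2 * Real.exp (-(s * z) + 2 * C * h * bet * s ^ 2 * m) := by
  have hSh : ∀ S : Finset (Fin n), S.card ≤ m → ∑ k ∈ S, wn k ≤ (∑ k, wn k) / 2 :=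
    fun S hc => (hS S hc).1.trans (by nlinarith)
  have hlK : l + (m - l) = m := by omega
  have hKc : ((m - l : ℕ) : ℝ) = (m : ℝ) - l := by push_cast [hlm]; ring
  have n1 := N_max wn hw (lam := lam) hp hl hpl hC h2 h3 hbet (by rw [abs_of_pos hlam0]; exact hlam1)
    (by rw [abs_of_pos hlam0]; exact hlb) l (m - l) (by omega)
    (fun S hc => hSh S (by omega)) (lam * x)
  have n2 := N_max wn hw (lam := -lam) hp hl hpl hC h2 h3 hbet
    (by rw [abs_neg, abs_of_pos hlam0]; exact hlam1)
    (by rw [abs_neg, abs_of_pos hlam0]; exact hlb) l (m - l) (by omega)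
    (fun S hc => hSh S (by omega)) (lam * x)
  have m1 := M_max wn hw (s := s) hp hl hC h3 hbet hb0 hh.le (by rw [abs_of_pos hs0]; exact hsb)
    m hmn.le hSh (s * z)
  have m2 := M_max wn hw (s := -s) hp hl hC h3 hbet hb0 hh.le
    (by rw [abs_neg, abs_of_pos hs0]; exact hsb) m hmn.le hSh (s * z)
  rw [neg_sq, hKc] at n2
  rw [hKc] at n1
  rw [neg_sq] at m2
  refine le_trans ?_ (by linarith [add_le_add (add_le_add n1 n2) (add_le_add m1 m2)] :
    (EX wn p (fun g σ => ind (∃ k ≤ m - l, lam * x ≤ lam * Ni wn p l k g σ))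
      + EX wn p (fun g σ => ind (∃ k ≤ m - l, lam * x ≤ -lam * Ni wn p l k g σ)))
      + (EX wn p (fun _ σ => ind (∃ k ≤ m, s * z ≤ s * Mi wn h k σ))
      + EX wn p (fun _ σ => ind (∃ k ≤ m, s * z ≤ -s * Mi wn h k σ))) ≤ _)
  rw [← EX_add, ← EX_add, ← EX_add]
  apply EX_mono wn p hw hp
  intro g σ
  have i1 := ind_nonneg (∃ k ≤ m - l, lam * x ≤ lam * Ni wn p l k g σ)
  have i2 := ind_nonneg (∃ k ≤ m - l, lam * x ≤ -lam * Ni wn p l k g σ)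
  have i3 := ind_nonneg (∃ k ≤ m, s * z ≤ s * Mi wn h k σ)
  have i4 := ind_nonneg (∃ k ≤ m, s * z ≤ -s * Mi wn h k σ)
  by_cases c1 : ∃ k ≤ m - l, lam * x ≤ lam * Ni wn p l k g σ
  · rw [ind_pos c1]; unfold ind at *; split_ifs <;> norm_num
  by_cases c2 : ∃ k ≤ m - l, lam * x ≤ -lam * Ni wn p l k g σ
  · rw [ind_pos c2]; unfold ind at *; split_ifs <;> norm_num
  by_cases c3 : ∃ k ≤ m, s * z ≤ s * Mi wn h k σ
  · rw [ind_pos c3]; unfold ind at *; split_ifs <;> norm_num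
  by_cases c4 : ∃ k ≤ m, s * z ≤ -s * Mi wn h k σ
  · rw [ind_pos c4]; unfold ind at *; split_ifs <;> norm_num
  have hno : ¬ ∃ u v : ℕ, l ≤ u ∧ u ≤ v ∧ v ≤ m ∧
      y ≤ |∑ i ∈ Finset.Ico u v, (Df i g σ - EX wn p (Df i))| := by
    rintro ⟨u, v, hlu, huv, hvm, hy⟩
    have hN : ∀ k ≤ m - l, |Ni wn p l k g σ| ≤ x := by
      intro k hk
      push Not at c1 c2
      have a1 := lt_of_mul_lt_mul_left (c1 k hk) hlam0.le
      have a2 := c2 k hk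
      rw [abs_le]
      constructor
      · nlinarith
      · exact a1.le
    have hM : ∀ k ≤ m, |Mi wn h k σ| ≤ z := by
      intro k hk
      push Not at c3 c4
      have a1 := lt_of_mul_lt_mul_left (c3 k hk) hs0.le
      have a2 := c4 k hk
      rw [abs_le]
      constructor
      · nlinarith
      · exact a1.le
    have hdec := fun i hi σ => phi_decomp wn hw hp hl hpl hC h2 h3 hh heta heta2 m hS i hi σ
    rw [← he] at hdec
    set c := (∑ j, wn j * xi wn h j) / ∑ k, wn k with hc
    -- expectation
    have hEX : ∀ i ≤ m, |EX wn p (Df i) - p * (∑ k, wn k ^ 2 - i * c)| ≤ e := by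
      intro i hi
      have hin : i < n := by omega
      have e1 : EX wn p (Df i) = EX wn p (fun _ σ => phi wn p i σ) := EX_Df wn hw p hin
      have e2 : EX wn p (fun _ σ => phi wn p i σ - (p * (∑ k, wn k ^ 2 - i * c) - p * Mi wn h i σ))
          = EX wn p (Df i) - p * (∑ k, wn k ^ 2 - i * c) := by
        rw [EX_sub, EX_sub, EX_const wn p hw, EX_mul, EX_Mi wn hw p h hin.le, e1]
        ring
      rw [← e2, abs_le]
      constructor
      · rw [← EX_const wn p hw (-e)]
        exact EX_mono wn p hw hp fun _ σ => (abs_le.mp (hdec i hi σ)).1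
      · rw [← EX_const wn p hw e]
        exact EX_mono wn p hw hp fun _ σ => (abs_le.mp (hdec i hi σ)).2
    have hstep : ∀ i ≤ m, |phi wn p i σ - EX wn p (Df i)| ≤ p * z + 2 * e := by
      intro i hi
      have a1 := abs_le.mp (hdec i hi σ)
      have a2 := abs_le.mp (hEX i hi)
      have a3 := abs_le.mp (hM i hi)
      have a4 := mul_le_mul_of_nonneg_left a3.1 hp
      have a5 := mul_le_mul_of_nonneg_left a3.2 hp
      rw [abs_le]
      constructor <;> linarith [a1.1, a1.2, a2.1, a2.2]
    have hs1 : ∑ i ∈ Finset.Ico u v, (Df i g σ - EX wn p (Df i))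
        = (Ni wn p l (v - l) g σ - Ni wn p l (u - l) g σ)
          + ∑ i ∈ Finset.Ico u v, (phi wn p i σ - EX wn p (Df i)) := by
      have b1 : ∀ v, l ≤ v → Ni wn p l (v - l) g σ
          = ∑ i ∈ Finset.Ico l v, (Df i g σ - phi wn p i σ) := by
        intro v _
        rw [Finset.sum_Ico_eq_sum_range]; rfl
      rw [b1 v (by omega), b1 u hlu, ← Finset.sum_Ico_consecutive _ hlu huv, add_sub_cancel_left,
        ← Finset.sum_add_distrib]
      exact Finset.sum_congr rfl fun i _ => by ring
    have hpe : 0 ≤ p * z + 2 * e := (abs_nonneg _).trans (hstep m le_rfl)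
    have hs2 : |∑ i ∈ Finset.Ico u v, (phi wn p i σ - EX wn p (Df i))|
        ≤ ((m : ℝ) - l) * (p * z + 2 * e) := by
      refine (Finset.abs_sum_le_sum_abs _ _).trans ?_
      refine (Finset.sum_le_sum (g := fun _ => p * z + 2 * e) fun i hi => hstep i
        ((Finset.mem_Ico.mp hi).2.le.trans hvm)).trans ?_
      rw [Finset.sum_const, Nat.card_Ico, nsmul_eq_mul]
      apply mul_le_mul_of_nonneg_right _ hpe
      rw [← hKc]
      exact_mod_cast (by omega : v - u ≤ m - l)
    have a1 := abs_le.mp (hN (v - l) (by omega))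
    have a2 := abs_le.mp (hN (u - l) (by omega))
    have a3 := abs_le.mp hs2
    rw [hs1] at hy
    have : |(Ni wn p l (v - l) g σ - Ni wn p l (u - l) g σ)
          + ∑ i ∈ Finset.Ico u v, (phi wn p i σ - EX wn p (Df i))| ≤
          2 * x + ((m : ℝ) - l) * (p * z + 2 * e) := by
      rw [abs_le]
      constructor <;> linarith [a1.1, a1.2, a2.1, a2.2, a3.1, a3.2]
    linarith
  unfold ind at *
  rw [if_neg hno]
  linarith

end core
/-! ### Asymptotic consequences of Conditions (C) -/

lemma tendsto_div_of_isLittleO {X : ℕ → ℝ} {a : ℝ} {g : ℕ → ℝ}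
    (h : (fun n : ℕ => X n - a * (n : ℝ)) =o[atTop] g)
    (hg : g =O[atTop] fun n : ℕ => (n : ℝ)) :
    Tendsto (fun n : ℕ => X n / (n : ℝ)) atTop (𝓝 a) := by
  have h1 := (h.trans_isBigO hg).tendsto_div_nhds_zero
  have h2 : Tendsto (fun n : ℕ => (X n - a * (n : ℝ)) / (n : ℝ) + a) atTop (𝓝 (0 + a)) :=
    h1.add_const a
  rw [zero_add] at h2
  refine h2.congr' ?_
  filter_upwards [eventually_gt_atTop 0] with n hn
  have : (0 : ℝ) < n := by exact_mod_cast hn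
  field_simp
  ring

lemma rpow_bigO : (fun n : ℕ => (n : ℝ) ^ ((2 : ℝ) / 3)) =O[atTop] fun n : ℕ => (n : ℝ) := by
  apply IsBigO.of_bound 1
  filter_upwards [eventually_ge_atTop 1] with n hn
  have h1 : (1 : ℝ) ≤ n := by exact_mod_cast hn
  rw [one_mul, Real.norm_of_nonneg (by positivity), Real.norm_of_nonneg (by positivity)]
  calc (n : ℝ) ^ ((2 : ℝ) / 3) ≤ (n : ℝ) ^ (1 : ℝ) := Real.rpow_le_rpow_of_exponent_le h1 (by norm_num)
    _ = n := Real.rpow_one _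

lemma one_bigO : (fun _ : ℕ => (1 : ℝ)) =O[atTop] fun n : ℕ => (n : ℝ) := by
  apply IsBigO.of_bound 1
  filter_upwards [eventually_ge_atTop 1] with n hn
  have h1 : (1 : ℝ) ≤ n := by exact_mod_cast hn
  rw [one_mul, Real.norm_of_nonneg (by positivity), Real.norm_of_nonneg (by positivity)]
  exact h1

/-- truncated cube -/
noncomputable def gTr (L : ℕ) (x : ℝ) : ℝ := (max 0 (min x L)) ^ 3

lemma gTr_nonneg (L : ℕ) (x : ℝ) : 0 ≤ gTr L x := by unfold gTr; positivity

lemma gTr_le (L : ℕ) (x : ℝ) : gTr L x ≤ (L : ℝ) ^ 3 := by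
  unfold gTr
  exact pow_le_pow_left₀ (le_max_left _ _) (max_le (by positivity) (min_le_right _ _)) 3

lemma gTr_le' (L : ℕ) {x : ℝ} (hx : 0 ≤ x) : gTr L x ≤ x ^ 3 := by
  unfold gTr
  exact pow_le_pow_left₀ (le_max_left _ _) (max_le hx (min_le_left _ _)) 3

lemma gTr_cont (L : ℕ) : Continuous (gTr L) := by
  unfold gTr; fun_prop

/-- truncated cube as a bounded continuous function -/
noncomputable def gTrB (L : ℕ) : BoundedContinuousFunction ℝ ℝ :=
  BoundedContinuousFunction.ofNormedAddCommGroup (gTr L) (gTr_cont L) ((L : ℝ) ^ 3) (by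
    intro x
    rw [Real.norm_of_nonneg (gTr_nonneg L x)]
    exact gTr_le L x)

section asym
variable {w : ∀ n : ℕ, Fin n → ℝ} {μ : Measure ℝ}

lemma mean_pos (hC : CondC w μ) : 0 < ∫ x, x ∂μ := by
  have := hC.isProb
  have hintg : Integrable (fun x : ℝ => x) μ := by
    refine Integrable.mono' (g := fun x => 1 + |x ^ 3|) ((integrable_const 1).add hC.int3.abs)
      measurable_id.aestronglyMeasurable ?_
    filter_upwards with x
    rw [Real.norm_eq_abs, abs_pow]
    have := abs_nonneg x
    by_cases h : |x| ≤ 1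
    · have := pow_nonneg this 3
      linarith
    · push Not at h
      nlinarith [mul_pos (by linarith : 0 < |x|) (by linarith : 0 < |x| - 1)]
  rw [integral_pos_iff_support_of_nonneg_ae (hC.pos.mono fun x hx => hx.le) hintg]
  have : μ (Function.support fun x : ℝ => x) = 1 := by
    rw [← measure_univ (μ := μ)]
    apply measure_congr
    filter_upwards [hC.pos] with x hx
    simp only [eq_iff_iff]
    exact ⟨fun _ => trivial, fun _ => hx.ne'⟩
  rw [this]
  norm_num

lemma sums_bound (hC : CondC w μ) : ∃ C ≥ (1 : ℝ), ∃ c1 > (0 : ℝ), ∀ᶠ n : ℕ in atTop,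
    c1 * n ≤ ell w n ∧ ell w n ≤ C * n ∧ ∑ i, w n i ^ 2 ≤ C * ell w n ∧
      ∑ i, w n i ^ 3 ≤ C * ell w n := by
  have hm := mean_pos hC
  set μ1 := ∫ x, x ∂μ with hμ1
  set μ3 := ∫ x, x ^ 3 ∂μ with hμ3
  have t1 := tendsto_div_of_isLittleO hC.ell_asymp rpow_bigO
  have t2 := tendsto_div_of_isLittleO hC.sq_asymp rpow_bigO
  rw [hC.moment_eq] at t2
  have t3 := tendsto_div_of_isLittleO hC.cube_asymp one_bigO
  rw [← hμ1] at t1 t2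
  rw [← hμ3] at t3
  have hμ30 : 0 ≤ μ3 := integral_nonneg_of_ae (hC.pos.mono fun x hx => (pow_pos hx 3).le)
  set C := max (max 4 (2 * (μ3 + 1) / μ1)) (2 * μ1) with hCdef
  have c4 : 4 ≤ C := (le_max_left _ _).trans (le_max_left _ _)
  have cb : 2 * (μ3 + 1) / μ1 ≤ C := (le_max_right _ _).trans (le_max_left _ _)
  have cc : 2 * μ1 ≤ C := le_max_right _ _
  refine ⟨C, by linarith, μ1 / 2, by linarith, ?_⟩
  filter_upwards [eventually_gt_atTop 0, t1.eventually_const_lt (by linarith : μ1 / 2 < μ1),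
    t1.eventually_lt_const (by linarith : μ1 < 2 * μ1),
    t2.eventually_lt_const (by linarith : μ1 < 2 * μ1),
    t3.eventually_lt_const (by linarith : μ3 < μ3 + 1)] with n hn e1 e2 e3 e4
  have hn0 : (0 : ℝ) < n := by exact_mod_cast hn
  rw [lt_div_iff₀ hn0] at e1
  rw [div_lt_iff₀ hn0] at e2 e3 e4
  have hell : 0 < ell w n := lt_trans (by positivity) e1
  refine ⟨e1.le, e2.le.trans (by nlinarith), ?_, ?_⟩
  · nlinarith
  · have : (μ3 + 1) * n ≤ 2 * (μ3 + 1) / μ1 * ell w n := by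
      rw [div_mul_eq_mul_div, le_div_iff₀ hm]
      nlinarith
    nlinarith

lemma pf_bound (hC : CondC w μ) {f : ℕ → ℝ}
    (hf : f =o[atTop] fun n : ℕ => (n : ℝ) ^ ((1 : ℝ) / 3)) :
    ∀ᶠ n : ℕ in atTop, 0 < pf w f n ∧ pf w f n * ell w n ≤ 2 := by
  obtain ⟨C, hC1, c1, hc1, hev⟩ := sums_bound hC
  have hc13 : 0 < c1 ^ ((1 : ℝ) / 3) := Real.rpow_pos_of_pos hc1 _
  have hfb := hf.bound (by positivity : 0 < c1 ^ ((1 : ℝ) / 3) / 2)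
  filter_upwards [eventually_gt_atTop 0, hev, hfb] with n hn e1 e2
  have hn0 : (0 : ℝ) < n := by exact_mod_cast hn
  have hell : 0 < ell w n := lt_of_lt_of_le (by positivity) e1.1
  have h3 : c1 ^ ((1 : ℝ) / 3) * (n : ℝ) ^ ((1 : ℝ) / 3) ≤ ell w n ^ ((1 : ℝ) / 3) := by
    rw [← Real.mul_rpow hc1.le hn0.le]
    exact Real.rpow_le_rpow (by positivity) e1.1 (by norm_num)
  rw [Real.norm_eq_abs, Real.norm_of_nonneg (by positivity)] at e2
  have hL3 : 0 < ell w n ^ ((1 : ℝ) / 3) := Real.rpow_pos_of_pos hell _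
  have e3 := abs_le.mp (e2.trans (by linarith : _ ≤ ell w n ^ ((1 : ℝ) / 3) / 2))
  have h43 : ell w n ^ ((4 : ℝ) / 3) = ell w n ^ ((1 : ℝ) / 3) * ell w n := by
    rw [← Real.rpow_add_one hell.ne']; norm_num
  unfold pf
  rw [h43]
  constructor
  · apply div_pos (by linarith) (by positivity)
  · rw [div_mul_eq_mul_div, div_le_iff₀ (by positivity)]
    nlinarith

lemma max_bound (hC : CondC w μ) {δ : ℝ} (hδ : 0 < δ) :
    ∀ᶠ n : ℕ in atTop, ∀ j, w n j ≤ δ * (n : ℝ) ^ ((1 : ℝ) / 3) := by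
  filter_upwards [hC.max_asymp.bound hδ] with n hn j
  rw [Real.norm_eq_abs, Real.norm_of_nonneg (by positivity)] at hn
  exact (le_ciSup (Set.finite_range _).bddAbove j).trans ((le_abs_self _).trans hn)

lemma exists_trunc (hC : CondC w μ) {ε : ℝ} (hε : 0 < ε) :
    ∃ L : ℕ, (∫ x, x ^ 3 ∂μ) - ∫ x, gTr L x ∂μ < ε := by
  have ht : Tendsto (fun L : ℕ => ∫ x, gTr L x ∂μ) atTop (𝓝 (∫ x, x ^ 3 ∂μ)) := by
    apply tendsto_integral_of_dominated_convergence (fun x => |x ^ 3|)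
    · exact fun L => (gTr_cont L).aestronglyMeasurable
    · exact hC.int3.abs
    · intro L
      filter_upwards [hC.pos] with x hx
      rw [Real.norm_of_nonneg (gTr_nonneg L x)]
      exact (gTr_le' L hx.le).trans (le_abs_self _)
    · filter_upwards [hC.pos] with x hx
      apply tendsto_const_nhds.congr'
      filter_upwards [eventually_ge_atTop ⌈x⌉₊] with L hL
      have : x ≤ L := (Nat.le_ceil x).trans (by exact_mod_cast hL)
      unfold gTr
      rw [min_eq_left this, max_eq_right hx.le]
  obtain ⟨L, hL⟩ := (ht.eventually_const_lt (by linarith : (∫ x, x ^ 3 ∂μ) - ε < _)).exists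
  exact ⟨L, by linarith⟩

lemma unif_int (hC : CondC w μ) {ε : ℝ} (hε : 0 < ε) :
    ∃ η > (0 : ℝ), ∀ᶠ n : ℕ in atTop, ∀ S : Finset (Fin n), (S.card : ℝ) ≤ η * n →
      ∑ k ∈ S, w n k ≤ ε * n ∧ ∑ k ∈ S, w n k ^ 3 ≤ ε * n := by
  obtain ⟨L, hL⟩ := exists_trunc hC (by positivity : 0 < ε / 4)
  have hL3 : (0 : ℝ) ≤ (L : ℝ) ^ 3 := by positivity
  refine ⟨min (ε / (4 * ((L : ℝ) ^ 3 + 1))) (ε / 2), by positivity, ?_⟩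
  have t3 := tendsto_div_of_isLittleO hC.cube_asymp one_bigO
  have tg := hC.weak (gTrB L)
  have td := t3.sub tg
  have hlt : (∫ x, x ^ 3 ∂μ) - ∫ x, (gTrB L) x ∂μ < ε / 4 := hL
  filter_upwards [eventually_gt_atTop 0, td.eventually_lt_const hlt] with n hn e1 S hS
  have hn0 : (0 : ℝ) < n := by exact_mod_cast hn
  have e2 : (∑ i, (w n i ^ 3 - gTr L (w n i))) ≤ ε / 4 * n := by
    rw [← sub_div, div_lt_iff₀ hn0, ← Finset.sum_sub_distrib] at e1
    exact e1.le
  have hS1 : (S.card : ℝ) ≤ ε / (4 * ((L : ℝ) ^ 3 + 1)) * n :=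
    hS.trans (mul_le_mul_of_nonneg_right (min_le_left _ _) hn0.le)
  have hS2 : (S.card : ℝ) ≤ ε / 2 * n :=
    hS.trans (mul_le_mul_of_nonneg_right (min_le_right _ _) hn0.le)
  have h3 : ∑ k ∈ S, w n k ^ 3 ≤ ε / 2 * n := by
    have a1 : ∑ k ∈ S, w n k ^ 3 = ∑ k ∈ S, gTr L (w n k) + ∑ k ∈ S, (w n k ^ 3 - gTr L (w n k)) := by
      rw [← Finset.sum_add_distrib]; exact Finset.sum_congr rfl fun k _ => by ring
    have a2 : ∑ k ∈ S, gTr L (w n k) ≤ S.card * (L : ℝ) ^ 3 := by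
      refine (Finset.sum_le_sum fun k _ => gTr_le L (w n k)).trans ?_
      rw [Finset.sum_const, nsmul_eq_mul]
    have a3 : ∑ k ∈ S, (w n k ^ 3 - gTr L (w n k)) ≤ ε / 4 * n :=
      (Finset.sum_le_sum_of_subset_of_nonneg (Finset.subset_univ _)
        fun k _ _ => by linarith [gTr_le' L (hC.w_pos n k).le]).trans e2
    have a4 : (S.card : ℝ) * (L : ℝ) ^ 3 ≤ ε / 4 * n := by
      have b1 : (S.card : ℝ) * (L : ℝ) ^ 3 ≤ ε / (4 * ((L : ℝ) ^ 3 + 1)) * n * ((L : ℝ) ^ 3 + 1) :=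
        mul_le_mul hS1 (by linarith) hL3 (by positivity)
      have b2 : ε / (4 * ((L : ℝ) ^ 3 + 1)) * n * ((L : ℝ) ^ 3 + 1) = ε / 4 * n := by
        field_simp
      linarith
    linarith
  refine ⟨?_, h3.trans (by nlinarith)⟩
  have a5 : ∑ k ∈ S, w n k ≤ ∑ k ∈ S, (1 + w n k ^ 3) := by
    apply Finset.sum_le_sum
    intro k _
    have hk := hC.w_pos n k
    by_cases h : w n k ≤ 1
    · have := pow_pos hk 3
      linarith
    · push Not at h
      nlinarith [mul_pos hk (by linarith : 0 < w n k - 1)]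
  rw [Finset.sum_add_distrib, Finset.sum_const, nsmul_eq_mul, mul_one] at a5
  linarith

end asym
/-! ### Choice of the parameters -/

set_option maxHeartbeats 2000000 in
lemma fixed_n {n : ℕ} (wn : Fin n → ℝ) (hw : ∀ i, 0 < wn i) {p C c1 C0 t y : ℝ} (hp : 0 < p)
    (hC : 1 ≤ C) (hc1 : 0 < c1) (hC0 : 1 ≤ C0) (ht : 1 ≤ t)
    (hL1 : c1 * n ≤ ∑ k, wn k) (hL2 : ∑ k, wn k ≤ C * n)
    (hpl : p * ∑ k, wn k ≤ 2) (h2 : ∑ k, wn k ^ 2 ≤ C * ∑ k, wn k)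
    (h3 : ∑ k, wn k ^ 3 ≤ C * ∑ k, wn k)
    {M eta δ : ℝ} (hM : M = 64 * C ^ 2 * C0) (heta : eta = 1 / (128 * C * C0))
    (hδ0 : 0 < δ) (hδ1 : 4 * δ ≤ 1) (hδ2 : 32 * M * δ ≤ c1) (hδ3 : 2048 * C * M * C0 * δ ≤ c1)
    (l m : ℕ) (hlm : l < m) (hmn : m < n)
    (hS : ∀ S : Finset (Fin n), S.card ≤ m → ∑ k ∈ S, wn k ≤ eta * (∑ k, wn k) ∧
      ∑ k ∈ S, wn k ^ 3 ≤ eta * (∑ k, wn k))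
    (hbet : ∀ j, wn j ≤ δ * t) (hy : 384 * C ^ 2 / c1 ≤ y)
    (hKm : ((m : ℝ) - l) * m ≤ C0 * (y * ∑ k, wn k)) :
    EX wn p (fun g σ => ind (∃ u v : ℕ, l ≤ u ∧ u ≤ v ∧ v ≤ m ∧
      y ≤ |∑ i ∈ Finset.Ico u v, (Df i g σ - EX wn p (Df i))|))
      ≤ (9216 * C) * Real.exp (-y ^ 2 / ((9216 * C) * (y * t + ((m : ℝ) - l)))) := by
  have hn0 : (0 : ℝ) < n := by exact_mod_cast (by omega : 0 < n)
  have hm0 : (0 : ℝ) < m := by exact_mod_cast (by omega : 0 < m)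
  have hmn' : (m : ℝ) ≤ n := by exact_mod_cast hmn.le
  have hlm' : (l : ℝ) < m := by exact_mod_cast hlm
  have hl0 : (0 : ℝ) ≤ l := by positivity
  set K : ℝ := (m : ℝ) - l with hK
  have hK0 : 0 < K := by linarith
  have hKm' : K ≤ m := by linarith
  set L := ∑ k, wn k with hL
  have hLp : 0 < L := lt_of_lt_of_le (by positivity) hL1
  have hy0 : 0 < y := lt_of_lt_of_le (by positivity) hy
  have hM0 : 0 < M := by rw [hM]; positivity
  have ht0 : 0 < t := by linarith
  have heta0 : 0 < eta := by rw [heta]; positivity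
  have heta2 : eta ≤ 1 / 2 := by
    rw [heta]
    apply one_div_le_one_div_of_le (by norm_num)
    linarith [one_le_mul_of_one_le_of_one_le hC hC0]
  set D := y * t + K with hD
  have hD0 : 0 < D := by positivity
  have hyD : y * t ≤ D := by linarith
  have hyD' : y ≤ D := (le_mul_of_one_le_right hy0.le ht).trans hyD
  have hpN : p * n ≤ 2 / c1 := by
    rw [le_div_iff₀ hc1]
    have := mul_le_mul_of_nonneg_left hL1 hp.le
    linarith
  set κ : ℝ := 1 / (576 * C) with hκ
  have hκ0 : 0 < κ := by positivity
  have hκ1 : κ ≤ 1 := by rw [hκ, div_le_one (by positivity)]; linarith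
  have hκC : 36 * C * κ = 1 / 16 := by rw [hκ]; field_simp; norm_num
  have hpKm : p * (K * m) ≤ 2 * (C0 * y) := by
    have := mul_le_mul_of_nonneg_left hKm hp.le
    have := mul_le_mul_of_nonneg_right hpl (by positivity : 0 ≤ C0 * y)
    linarith
  have core := core_bound wn hw (h := M * n / m) (lam := κ * y / D) (s := 16 * K * p / t)
    (x := y / 8) (z := y / (4 * K * p)) (y := y) (bet := δ * t) hp.le hLp hpl hC h2 h3
    (by positivity) heta0.le heta2 l m hlm.le hmn hS hbet (by positivity) (by positivity)
    (by
      rw [div_le_one hD0]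
      exact (mul_le_of_le_one_left hy0.le hκ1).trans hyD')
    (by
      rw [show 4 * (κ * y / D) * (δ * t) = (4 * δ) * κ * (y * t) / D by ring, div_le_one hD0]
      have : (4 * δ) * κ ≤ 1 := mul_le_one₀ hδ1 hκ0.le hκ1
      exact (mul_le_of_le_one_left (mul_pos hy0 ht0).le this).trans hyD)
    (by positivity)
    (by
      have : 16 * K * p / t * (M * n / m * (δ * t)) = 16 * M * δ * (p * n) * (K / m) := by
        field_simp
      rw [this]
      have hKm1 : K / m ≤ 1 := by rw [div_le_one hm0]; exact hKm'
      have h5 : 16 * M * δ * (p * n) ≤ 16 * M * δ * (2 / c1) :=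
        mul_le_mul_of_nonneg_left hpN (by positivity)
      have h6 : 16 * M * δ * (2 / c1) ≤ 1 := by
        rw [show 16 * M * δ * (2 / c1) = (32 * M * δ) / c1 by ring, div_le_one hc1]
        exact hδ2
      calc 16 * M * δ * (p * n) * (K / m) ≤ 1 * 1 :=
            mul_le_mul (h5.trans h6) hKm1 (by positivity) (by norm_num)
        _ = 1 := one_mul 1)
    rfl
    (by
      have e1 : K * (p * (y / (4 * K * p))) = y / 4 := by field_simp
      have e2 : K * (12 * C ^ 2 / L) ≤ y / 32 := by
        have a1 : K * (12 * C ^ 2 / L) ≤ 12 * C ^ 2 / c1 := by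
          rw [mul_div_assoc', div_le_div_iff₀ hLp hc1]
          have : c1 * K ≤ L :=
            (mul_le_mul_of_nonneg_left (hKm'.trans hmn') hc1.le).trans hL1
          linarith [mul_le_mul_of_nonneg_left this (by positivity : 0 ≤ 12 * C ^ 2)]
        have a2 : 384 * C ^ 2 / c1 = 32 * (12 * C ^ 2 / c1) := by ring
        linarith
      have e3 : K * (p * (C * L / (M * n / m))) ≤ y / 32 := by
        have a1 : K * (p * (C * L / (M * n / m))) = (p * (K * m)) * C * (L / n) / M := by
          field_simp
        rw [a1, div_le_iff₀ hM0]
        have a2 : L / n ≤ C := by rw [div_le_iff₀ hn0]; exact hL2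
        have a3 : (p * (K * m)) * C * (L / n) ≤ (2 * (C0 * y)) * C * C := by
          apply mul_le_mul _ a2 (by positivity) (by positivity)
          exact mul_le_mul_of_nonneg_right hpKm (by positivity)
        rw [hM]
        linarith
      have e4 : K * (p * (2 * C * eta * m)) ≤ y / 32 := by
        have a1 : K * (p * (2 * C * eta * m)) = (p * (K * m)) * (2 * C * eta) := by ring
        have a2 : (p * (K * m)) * (2 * C * eta) ≤ (2 * (C0 * y)) * (2 * C * eta) :=
          mul_le_mul_of_nonneg_right hpKm (by positivity)
        have a3 : (2 * (C0 * y)) * (2 * C * eta) = y / 32 := by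
          rw [heta]; field_simp; norm_num
        linarith
      have e5 : 2 * (y / 8) + K * (p * (y / (4 * K * p)) + 2 * (12 * C ^ 2 / L
          + p * (C * L / (M * n / m) + 2 * C * eta * m)))
          = y / 4 + K * (p * (y / (4 * K * p))) + 2 * (K * (12 * C ^ 2 / L)
            + K * (p * (C * L / (M * n / m))) + K * (p * (2 * C * eta * m))) := by ring
      rw [e5, e1]
      linarith)
  refine core.trans ?_
  set Q := y ^ 2 / D with hQ
  have hQ0 : 0 < Q := by positivity
  have b1 : -(κ * y / D * (y / 8)) + 36 * C * (κ * y / D) ^ 2 * K ≤ -(κ * Q / 16) := by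
    have c1' : κ * y / D * (y / 8) = κ * Q / 8 := by rw [hQ]; ring
    have c2' : 36 * C * (κ * y / D) ^ 2 * K = (36 * C * κ) * (κ * Q) * (K / D) := by
      rw [hQ]; field_simp
    have c3' : K / D ≤ 1 := by rw [div_le_one hD0]; linarith [mul_pos hy0 ht0]
    rw [c1', c2', hκC]
    have : 1 / 16 * (κ * Q) * (K / D) ≤ 1 / 16 * (κ * Q) * 1 :=
      mul_le_mul_of_nonneg_left c3' (by positivity)
    linarith
  have hQt : Q ≤ y / t := by
    rw [hQ, div_le_div_iff₀ hD0 ht0]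
    have := mul_le_mul_of_nonneg_left hyD hy0.le
    linarith
  have b2 : -(16 * K * p / t * (y / (4 * K * p)))
      + 2 * C * (M * n / m) * (δ * t) * (16 * K * p / t) ^ 2 * m ≤ -(κ * Q / 16) := by
    have c1' : 16 * K * p / t * (y / (4 * K * p)) = 4 * (y / t) := by field_simp; norm_num
    have c2' : 2 * C * (M * n / m) * (δ * t) * (16 * K * p / t) ^ 2 * m
        = 512 * C * M * δ * ((p * n) * (p * (K * K))) / t := by field_simp; ring
    have c3' : p * (K * K) ≤ 2 * (C0 * y) := by
      refine le_trans ?_ hpKm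
      exact mul_le_mul_of_nonneg_left (mul_le_mul_of_nonneg_left hKm' hK0.le) hp.le
    have c4' : (p * n) * (p * (K * K)) ≤ (2 / c1) * (2 * (C0 * y)) :=
      mul_le_mul hpN c3' (by positivity) (by positivity)
    have c5' : 512 * C * M * δ * ((p * n) * (p * (K * K))) ≤ y := by
      refine (mul_le_mul_of_nonneg_left c4' (by positivity)).trans ?_
      rw [show 512 * C * M * δ * ((2 / c1) * (2 * (C0 * y)))
        = (2048 * C * M * C0 * δ) * y / c1 by ring, div_le_iff₀ hc1]
      have := mul_le_mul_of_nonneg_right hδ3 hy0.le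
      linarith
    have c6' : 512 * C * M * δ * ((p * n) * (p * (K * K))) / t ≤ y / t :=
      div_le_div_of_nonneg_right c5' ht0.le
    rw [c1', c2']
    have c7' : κ * Q ≤ Q := mul_le_of_le_one_left hQ0.le hκ1
    linarith
  have hfin : -y ^ 2 / ((9216 * C) * D) = -(κ * Q / 16) := by
    rw [hQ, hκ]; field_simp; norm_num
  rw [hfin]
  have d1 := Real.exp_le_exp.mpr b1
  have d2 := Real.exp_le_exp.mpr b2
  have d3 := Real.exp_pos (-(κ * Q / 16))
  have d4 := mul_le_mul_of_nonneg_right (by linarith : 4 ≤ 9216 * C) d3.le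
  linarith

/-- increments of `L⁰` -/
lemma L0_incr {n : ℕ} (g : Fin n → Fin n → Bool) (σ : Equiv.Perm (Fin n)) {u v : ℕ} (huv : u ≤ v)
    (hv : v ≤ n) : ((L0 (graphOf g) σ v : ℝ) - (L0 (graphOf g) σ u : ℝ))
      = (-((v : ℝ) - u)) + ∑ i ∈ Finset.Ico u v, Df i g σ := by
  have h1 : ∀ k ≤ n, (L0 (graphOf g) σ k : ℝ) = 1 - (k : ℝ) + ∑ i ∈ Finset.range k, Df i g σ := by
    intro k hk
    unfold L0
    push_cast
    congr 1
    exact Finset.sum_congr rfl fun i hi => discNbrs_eq i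
      (lt_of_lt_of_le (Finset.mem_range.mp hi) hk) g σ
  rw [h1 v hv, h1 u (huv.trans hv), Finset.sum_Ico_eq_sub _ huv]
  ring

lemma L0_measure {n : ℕ} (wn : Fin n → ℝ) (hw : ∀ i, 0 < wn i) {p : ℝ} (hp : 0 ≤ p)
    (l m : ℕ) (hmn : m ≤ n) (y B : ℝ)
    (hB : EX wn p (fun g σ => ind (∃ u v : ℕ, l ≤ u ∧ u ≤ v ∧ v ≤ m ∧
      y ≤ |∑ i ∈ Finset.Ico u v, (Df i g σ - EX wn p (Df i))|)) ≤ B) :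
    expMeasure' n wn p
          {ω : (Fin n → Fin n → Bool) × (Fin n → Fin n) |
            ∃ u v : ℕ, l ≤ u ∧ u ≤ v ∧ v ≤ m ∧
              y ≤ |((L0 (graphOf ω.1) ω.2 v : ℝ) - (L0 (graphOf ω.1) ω.2 u : ℝ)) -
                  ∫ ω', ((L0 (graphOf ω'.1) ω'.2 v : ℝ) - (L0 (graphOf ω'.1) ω'.2 u : ℝ))
                    ∂expMeasure' n wn p|} ≤ ENNReal.ofReal B := by
  rw [measure_exp wn hw hp]
  apply ENNReal.ofReal_le_ofReal
  refine le_trans ?_ hB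
  apply EX_mono wn p hw hp
  intro g σ
  split_ifs with h
  · rw [ind_pos]
    obtain ⟨u, v, hlu, huv, hvm, hy⟩ := h
    refine ⟨u, v, hlu, huv, hvm, ?_⟩
    refine hy.trans (le_of_eq ?_)
    congr 1
    rw [integral_expM wn hw hp]
    simp only [L0_incr _ _ huv (hvm.trans hmn)]
    rw [EX_add, EX_const wn p hw, EX_sum, Finset.sum_sub_distrib]
    ring
  · exact ind_nonneg _

/-- Theorem of the paper: concentration of the process `L⁰`. -/
theorem L0_process_concentration
    (w : ∀ n : ℕ, Fin n → ℝ) (μ : Measure ℝ) (hC : CondC w μ)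
    (f : ℕ → ℝ) (hf : f =o[atTop] fun n : ℕ => (n : ℝ) ^ ((1 : ℝ) / 3)) :
    ∃ Abar > (0 : ℝ), ∃ A > (0 : ℝ), ∀ m l : ℕ → ℕ, ∀ y : ℕ → ℝ,
      Cond3 w Abar (fun n => (m n : ℝ)) (fun n => (l n : ℝ)) (fun _ => (0 : ℝ)) y →
      ∀ᶠ n : ℕ in atTop,
        expMeasure' n (w n) (pf w f n)
          {ω : (Fin n → Fin n → Bool) × (Fin n → Fin n) |
            ∃ u v : ℕ, l n ≤ u ∧ u ≤ v ∧ v ≤ m n ∧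
              y n ≤ |((L0 (graphOf ω.1) ω.2 v : ℝ) - (L0 (graphOf ω.1) ω.2 u : ℝ)) -
                  ∫ ω', ((L0 (graphOf ω'.1) ω'.2 v : ℝ) - (L0 (graphOf ω'.1) ω'.2 u : ℝ))
                    ∂expMeasure' n (w n) (pf w f n)|}
        ≤ ENNReal.ofReal (A * Real.exp
            (-(y n) ^ 2 / (A * (y n * (n : ℝ) ^ ((1 : ℝ) / 3) + ((m n : ℝ) - (l n : ℝ)))))) := by
  obtain ⟨C, hC1, c1, hc1, hsums⟩ := sums_bound hC
  refine ⟨1, one_pos, 9216 * C, by positivity, ?_⟩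
  intro m l y h3
  obtain ⟨C0', hC0', hsq⟩ := h3.c2.a_sq_bigO.exists_pos
  set C0 := max C0' 1 with hC0def
  have hC0 : 1 ≤ C0 := le_max_right _ _
  set M : ℝ := 64 * C ^ 2 * C0 with hM
  set eta : ℝ := 1 / (128 * C * C0) with heta
  have hM0 : 0 < M := by positivity
  have heta0 : 0 < eta := by positivity
  set δ : ℝ := min (1 / 4) (min (c1 / (32 * M)) (c1 / (2048 * C * M * C0))) with hδ
  have hδ0 : 0 < δ := by positivity
  have hδ1 : 4 * δ ≤ 1 := by linarith [min_le_left (1 / 4) (min (c1 / (32 * M)) (c1 / (2048 * C * M * C0)))]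
  have hδ2 : 32 * M * δ ≤ c1 := by
    have : δ ≤ c1 / (32 * M) := (min_le_right _ _).trans (min_le_left _ _)
    rw [le_div_iff₀ (by positivity)] at this
    linarith
  have hδ3 : 2048 * C * M * C0 * δ ≤ c1 := by
    have : δ ≤ c1 / (2048 * C * M * C0) := (min_le_right _ _).trans (min_le_right _ _)
    rw [le_div_iff₀ (by positivity)] at this
    linarith
  obtain ⟨η', hη', hui⟩ := unif_int hC (mul_pos heta0 hc1)
  have hmo : ∀ c > (0 : ℝ), ∀ᶠ n : ℕ in atTop, (m n : ℝ) ≤ c * n := by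
    intro c hc
    filter_upwards [h3.sum_lito.bound hc] with n hn
    simp only [add_zero] at hn
    rwa [Real.norm_of_nonneg (by positivity), Real.norm_of_nonneg (by positivity)] at hn
  filter_upwards [eventually_gt_atTop 0, hsums, pf_bound hC hf, max_bound hC hδ0, hui,
    hmo η' hη', hmo (1 / 2) (by norm_num), h3.diff_top.eventually_gt_atTop 0,
    h3.c2.b_top.eventually_ge_atTop (384 * C ^ 2 / c1), hsq.bound] with
    n hn hs hpf hmax hS hm1 hm2 hdiff hy hsqn
  have hn0 : (0 : ℝ) < n := by exact_mod_cast hn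
  obtain ⟨s1, s2, s3, s4⟩ := hs
  have hell : 0 < ell w n := lt_of_lt_of_le (by positivity) s1
  have hy0 : 0 < y n := lt_of_lt_of_le (by positivity) hy
  have hmn : m n < n := by
    have : (m n : ℝ) < n := by linarith
    exact_mod_cast this
  have hlm : l n < m n := by
    have : (l n : ℝ) < m n := by linarith
    exact_mod_cast this
  have hKm : ((m n : ℝ) - l n) * m n ≤ C0 * (y n * ell w n) := by
    simp only [add_zero] at hsqn
    rw [Real.sq_sqrt (by positivity), Real.norm_of_nonneg (by positivity),
      Real.norm_of_nonneg (by positivity)] at hsqn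
    exact hsqn.trans (mul_le_mul_of_nonneg_right (le_max_left _ _) (by positivity))
  apply L0_measure (w n) (hC.w_pos n) hpf.1.le (l n) (m n) hmn.le
  refine fixed_n (w n) (hC.w_pos n) hpf.1 hC1 hc1 hC0
    (Real.one_le_rpow (by exact_mod_cast hn) (by norm_num)) s1 s2 hpf.2 s3 s4 hM heta hδ0 hδ1 hδ2 hδ3
    (l n) (m n) hlm hmn ?_ hmax hy hKm
  intro S hSc
  have hSc' : (S.card : ℝ) ≤ η' * n := le_trans (by exact_mod_cast hSc) hm1
  have hle : eta * c1 * n ≤ eta * ∑ k, w n k := by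
    rw [mul_assoc]
    exact mul_le_mul_of_nonneg_left s1 heta0.le
  exact ⟨(hS S hSc').1.trans hle, (hS S hSc').2.trans hle⟩
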